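/- For any real numbers d₁ > 0, d₂ > 0, d₃ > 0, any nonnegative integer λ, and constants C₁, C₂, C₃ > 0, there are only finitely many positive integers k for which there exist integers α, β, γ ≥ 1, ι ≥ 0 with |α − λk| ≤ C₁k^{1−d₁}, ι ≤ C₂k^{1−d₂}, β ≤ C₃·k·log^{d₃}k, such that the set of primes p with α ≤ p ≤ β has exactly γφ(k) + ι elements and contains at least γ primes in each invertible residue class modulo k. -/

import Mathlib

/-!
Increments of the `k`-periodic function `1 - cos (2πx/k)`, summed over the primes of `[α, β]`, are
estimated in two ways. If `k` is a `P(α, β, γ, ι)`-integer, then up to `ι` leftover primes the sum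
is `γ` times a sum over the reduced residue classes. This is the real part of a multiple of the
Ramanujan sum `c_k(1) = μ(k)`, so the whole sum is `O((γ + ι) / k)`. On the other hand the function
is least at the multiples of `k` and the interval starts near `λk`, so increments weighted by the
decreasing prime density `1 / log x` have a sum `≫ 1 / log² k`.

Since `β` may exceed `k` by any power of `log k`, replacing primes by their density needs the prime
number theorem with error `O(x / log ^ M x)` for every `M`. The `3-4-1` inequality bounds every
derivative of `-ζ'/ζ - ζ` by `O((1 + |t|) ^ (1/2))` on `1 ≤ re s`, so a smoothed Perron formula
shows `∑ n ≤ x, log ^ N n * (Λ n - 1) * (x - n) = O(x²)`. Half of the `N` powers of `log` pay for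
removing the factor `x - n`, and partial summation turns the others into a saving.
-/

open Filter Finset Topology MeasureTheory
open scoped ArithmeticFunction.vonMangoldt

/-! ### Bounds for the Riemann zeta function near the line `re s = 1` -/

lemma norm_ofReal_cpow_neg_sub_le {a x y : ℝ} (ha : 0 < a) (hx : a ≤ x) (hy : a ≤ y) {s : ℂ}
    (hs : -1 ≤ s.re) :
    ‖(y : ℂ) ^ (-s) - (x : ℂ) ^ (-s)‖ ≤ ‖s‖ * a ^ (-s.re - 1) * |y - x| := by
  rcases eq_or_ne s 0 with rfl | hs0
  · simp
  refine (convex_Ici a).norm_image_sub_le_of_norm_hasDerivWithin_le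
    (f := fun u : ℝ ↦ (u : ℂ) ^ (-s)) (f' := fun u : ℝ ↦ -s * (u : ℂ) ^ (-s - 1))
    (fun u hu ↦ ?_) (fun u hu ↦ ?_) hx hy
  · exact (hasDerivAt_ofReal_cpow_const (ha.trans_le hu).ne' (neg_ne_zero.2 hs0)).hasDerivWithinAt
  · rw [norm_mul, norm_neg, Complex.norm_cpow_eq_rpow_re_of_pos (ha.trans_le hu)]
    gcongr
    simpa using Real.rpow_le_rpow_of_nonpos ha hu (by linarith)

/-- `(s - 1)` times the approximation of `ζ(s)` by the first `M` terms of its Dirichlet series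
plus the tail integral `∫ u in Ioi M, u ^ (-s) = M ^ (1 - s) / (s - 1)`. -/
noncomputable def zetaApprox (M : ℕ) (s : ℂ) : ℂ :=
  (s - 1) * ∑ n ∈ range M, ((n + 1 : ℕ) : ℂ) ^ (-s) + (M : ℂ) ^ (1 - s)

lemma differentiable_zetaApprox_succ (M : ℕ) : Differentiable ℂ (zetaApprox (M + 1)) := by
  intro s
  refine ((differentiableAt_id.sub_const 1).mul (DifferentiableAt.fun_sum fun n _ ↦ ?_)).add ?_
  · exact differentiableAt_id.neg.const_cpow (Or.inl (Nat.cast_ne_zero.2 n.succ_ne_zero))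
  · exact (differentiableAt_id.const_sub 1).const_cpow (Or.inl (Nat.cast_ne_zero.2 M.succ_ne_zero))

lemma norm_zetaApprox_succ_sub_le {M : ℕ} (hM : M ≠ 0) {s : ℂ} (hs : -1 ≤ s.re) :
    ‖zetaApprox (M + 1) s - zetaApprox M s‖ ≤ ‖s - 1‖ * ‖s‖ * (M : ℝ) ^ (-s.re - 1) := by
  rcases eq_or_ne s 1 with rfl | hs1
  · simp [zetaApprox]
  have hM0 : (0 : ℝ) < M := by positivity
  have hpos {u : ℝ} (hu : u ∈ Set.Icc (M : ℝ) (M + 1)) : 0 < u := hM0.trans_le hu.1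
  let f (u : ℝ) : ℂ := (s - 1) * ((M + 1 : ℝ) : ℂ) ^ (-s) * u + (u : ℂ) ^ (1 - s)
  let f' (u : ℝ) : ℂ := (s - 1) * (((M + 1 : ℝ) : ℂ) ^ (-s) - (u : ℂ) ^ (-s))
  have hf : ∀ u ∈ Set.Icc (M : ℝ) (M + 1),
      HasDerivWithinAt f (f' u) (Set.Icc (M : ℝ) (M + 1)) u := by
    intro u hu
    have h₁ := (Complex.ofRealCLM.hasDerivAt (x := u)).const_mul
      ((s - 1) * ((M + 1 : ℝ) : ℂ) ^ (-s))
    have h₂ := hasDerivAt_ofReal_cpow_const (hpos hu).ne' (sub_ne_zero.2 hs1.symm)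
    refine ((h₁.add h₂).congr_deriv ?_).hasDerivWithinAt
    simp only [f', Complex.ofRealCLM_apply, Complex.ofReal_one, sub_sub_cancel_left]
    ring
  have hf' : ∀ u ∈ Set.Icc (M : ℝ) (M + 1), ‖f' u‖ ≤ ‖s - 1‖ * ‖s‖ * (M : ℝ) ^ (-s.re - 1) := by
    intro u hu
    rw [norm_mul, mul_assoc]
    gcongr
    refine (norm_ofReal_cpow_neg_sub_le hM0 hu.1 (by linarith) hs).trans ?_
    exact mul_le_of_le_one_right (by positivity) (abs_le.2 ⟨by linarith [hu.2], by linarith [hu.1]⟩)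
  have := (convex_Icc (M : ℝ) (M + 1)).norm_image_sub_le_of_norm_hasDerivWithin_le hf hf'
    (x := (M : ℝ)) (y := (M : ℝ) + 1) (by simp) (by simp)
  convert this using 1
  · simp only [f, zetaApprox, sum_range_succ]
    push_cast
    ring_nf
  · simp

lemma summable_natCast_succ_rpow {p : ℝ} (hp : p < -1) :
    Summable fun n : ℕ ↦ ((n + 1 : ℕ) : ℝ) ^ p :=
  (summable_nat_add_iff 1).2 (Real.summable_nat_rpow.2 hp)

lemma tendsto_zetaApprox_of_one_lt {s : ℂ} (hs : 1 < s.re) :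
    Tendsto (zetaApprox · s) atTop (𝓝 (riemannZeta₁ s)) := by
  have hs1 : s ≠ 1 := by rintro rfl; simp at hs
  have hζ : riemannZeta₁ s = (s - 1) * riemannZeta s + 0 := by
    rw [riemannZeta_eq_inv_sub_mul hs1, mul_inv_cancel_left₀ (sub_ne_zero.2 hs1), add_zero]
  rw [hζ]
  refine Tendsto.add (Tendsto.const_mul _ ?_) ?_
  · rw [zeta_eq_tsum_one_div_nat_add_one_cpow hs]
    have hsum : Summable fun n : ℕ ↦ ((n + 1 : ℕ) : ℂ) ^ (-s) := by
      refine .of_norm (((summable_natCast_succ_rpow (p := -s.re) (by linarith)).congr fun n ↦ ?_))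
      rw [Complex.norm_natCast_cpow_of_pos n.succ_pos, Complex.neg_re]
    simpa [Complex.cpow_neg] using hsum.hasSum.tendsto_sum_nat
  · rw [tendsto_zero_iff_norm_tendsto_zero]
    refine ((tendsto_rpow_neg_atTop (sub_pos.2 hs)).comp tendsto_natCast_atTop_atTop).congr' ?_
    filter_upwards [eventually_gt_atTop 0] with n hn
    rw [Complex.norm_natCast_cpow_of_pos hn, Function.comp_apply, Complex.sub_re, Complex.one_re,
      neg_sub]

lemma differentiableOn_tsum_zetaApprox_sub :
    DifferentiableOn ℂ (fun s ↦ ∑' i, (zetaApprox (i + 2) s - zetaApprox (i + 1) s))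
      {s | 0 < s.re} := by
  intro z (hz : 0 < z.re)
  set W : Set ℂ := {w | z.re / 2 < w.re} ∩ Metric.ball 0 (‖z‖ + 1)
  have hWo : IsOpen W :=
    (isOpen_lt continuous_const Complex.continuous_re).inter Metric.isOpen_ball
  have hzW : z ∈ W := ⟨half_lt_self hz, by simp⟩
  suffices DifferentiableOn ℂ (fun s ↦ ∑' i, (zetaApprox (i + 2) s - zetaApprox (i + 1) s)) W from
    (this.differentiableAt (hWo.mem_nhds hzW)).differentiableWithinAt
  refine Complex.differentiableOn_tsum_of_summable_norm
    (u := fun i ↦ (‖z‖ + 2) * (‖z‖ + 1) * ((i + 1 : ℕ) : ℝ) ^ (-(z.re / 2) - 1))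
    ((summable_natCast_succ_rpow (by linarith)).mul_left _) (fun i ↦ ?_) hWo fun i w hw ↦ ?_
  · exact ((differentiable_zetaApprox_succ _).sub
      (differentiable_zetaApprox_succ _)).differentiableOn
  · have hw_re : z.re / 2 < w.re := hw.1
    have hw_norm : ‖w‖ < ‖z‖ + 1 := mem_ball_zero_iff.1 hw.2
    refine (norm_zetaApprox_succ_sub_le i.succ_ne_zero (by linarith)).trans ?_
    have : ‖w - 1‖ ≤ ‖w‖ + 1 := (norm_sub_le _ _).trans_eq (by rw [norm_one])
    gcongr
    · linarith
    · simp

lemma tendsto_zetaApprox {s : ℂ} (hs : 0 < s.re) :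
    Tendsto (zetaApprox · s) atTop (𝓝 (riemannZeta₁ s)) := by
  have htel (z : ℂ) (n : ℕ) : ∑ i ∈ range n, (zetaApprox (i + 2) z - zetaApprox (i + 1) z)
      = zetaApprox (n + 1) z - zetaApprox 1 z :=
    sum_range_sub (fun i ↦ zetaApprox (i + 1) z) n
  have hsum {z : ℂ} (hz : 0 < z.re) :
      Summable fun i ↦ zetaApprox (i + 2) z - zetaApprox (i + 1) z :=
    .of_norm_bounded ((summable_natCast_succ_rpow (p := -z.re - 1) (by linarith)).mul_left _)
      fun i ↦ norm_zetaApprox_succ_sub_le i.succ_ne_zero (by linarith)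
  have hU : IsOpen {z : ℂ | 0 < z.re} := isOpen_lt continuous_const Complex.continuous_re
  have hright : ∀ᶠ z in 𝓝 (2 : ℂ), 1 < z.re :=
    continuous_const.continuousAt.eventually_lt Complex.continuous_re.continuousAt (by simp)
  have hζ : riemannZeta₁ s
      = zetaApprox 1 s + ∑' i, (zetaApprox (i + 2) s - zetaApprox (i + 1) s) := by
    refine (differentiable_riemannZeta₁.differentiableOn.analyticOnNhd
      hU).eqOn_of_preconnected_of_eventuallyEq (DifferentiableOn.analyticOnNhd
      ((differentiable_zetaApprox_succ 0).differentiableOn.add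
        differentiableOn_tsum_zetaApprox_sub) hU)
      (convex_halfSpace_re_gt 0).isPreconnected (z₀ := 2) (by simp) ?_ hs
    filter_upwards [hright] with z hz
    have h₁ := (hsum (by linarith)).hasSum.tendsto_sum_nat.const_add (zetaApprox 1 z)
    simp only [htel, add_sub_cancel] at h₁
    exact tendsto_nhds_unique
      ((tendsto_add_atTop_iff_nat 1).2 (tendsto_zetaApprox_of_one_lt hz)) h₁
  have h₁ := (hsum hs).hasSum.tendsto_sum_nat.const_add (zetaApprox 1 s)
  simp only [htel, add_sub_cancel, ← hζ] at h₁
  exact (tendsto_add_atTop_iff_nat 1).1 h₁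

lemma norm_riemannZeta₁_sub_zetaApprox_le (M : ℕ) {s : ℂ} (hs : 0 < s.re) :
    ‖riemannZeta₁ s - zetaApprox (M + 1) s‖
      ≤ ‖s - 1‖ * ‖s‖ * ∑' i : ℕ, ((M + i + 1 : ℕ) : ℝ) ^ (-s.re - 1) := by
  rw [← dist_eq_norm, dist_comm, ← tsum_mul_left]
  refine dist_le_tsum_of_dist_le_of_tendsto (f := fun i ↦ zetaApprox (i + 1) s)
    (fun i ↦ ‖s - 1‖ * ‖s‖ * ((i + 1 : ℕ) : ℝ) ^ (-s.re - 1)) (fun i ↦ ?_)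
    ((summable_natCast_succ_rpow (by linarith)).mul_left _)
    ((tendsto_add_atTop_iff_nat 1).2 (tendsto_zetaApprox hs)) M
  rw [dist_comm, dist_eq_norm]
  exact norm_zetaApprox_succ_sub_le i.succ_ne_zero (by linarith)

lemma natCast_rpow_le_mul {ε p : ℝ} (hε : 0 < ε) {n M : ℕ} (hn : n + 1 ≤ M) (hp : p ≤ ε - 1) :
    ((n + 1 : ℕ) : ℝ) ^ p ≤ (M : ℝ) ^ (2 * ε) * ((n + 1 : ℕ) : ℝ) ^ (-1 - ε) := by
  calc ((n + 1 : ℕ) : ℝ) ^ p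
      ≤ ((n + 1 : ℕ) : ℝ) ^ (2 * ε + (-1 - ε)) :=
        Real.rpow_le_rpow_of_exponent_le (by simp) (by linarith)
    _ = ((n + 1 : ℕ) : ℝ) ^ (2 * ε) * ((n + 1 : ℕ) : ℝ) ^ (-1 - ε) :=
        Real.rpow_add (by positivity) _ _
    _ ≤ _ := by gcongr

lemma norm_sum_range_cpow_neg_le {ε : ℝ} (hε : 0 < ε) (M : ℕ) {s : ℂ} (hs : 1 - ε ≤ s.re) :
    ‖∑ n ∈ range M, ((n + 1 : ℕ) : ℂ) ^ (-s)‖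
      ≤ (M : ℝ) ^ (2 * ε) * ∑' n : ℕ, ((n + 1 : ℕ) : ℝ) ^ (-1 - ε) := by
  calc ‖∑ n ∈ range M, ((n + 1 : ℕ) : ℂ) ^ (-s)‖
      ≤ ∑ n ∈ range M, (M : ℝ) ^ (2 * ε) * ((n + 1 : ℕ) : ℝ) ^ (-1 - ε) := by
        refine norm_sum_le_of_le _ fun n hn ↦ ?_
        rw [Complex.norm_natCast_cpow_of_pos n.succ_pos]
        exact natCast_rpow_le_mul hε (mem_range.1 hn) (by rw [Complex.neg_re]; linarith)
    _ ≤ _ := by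
        rw [← mul_sum]
        gcongr
        exact (summable_natCast_succ_rpow (by linarith)).sum_le_tsum _ fun n _ ↦ by positivity

lemma tsum_natCast_add_rpow_le {ε σ : ℝ} (hε : 0 < ε) (hε₂ : ε ≤ 1 / 2) (hσ : 1 - ε ≤ σ) (M : ℕ) :
    ∑' i : ℕ, ((M + i + 1 : ℕ) : ℝ) ^ (-σ - 1)
      ≤ ((M + 1 : ℕ) : ℝ) ^ (2 * ε - 1) * ∑' n : ℕ, ((n + 1 : ℕ) : ℝ) ^ (-1 - ε) := by
  have hsum {p : ℝ} (hp : p < -1) : Summable fun i : ℕ ↦ ((M + i + 1 : ℕ) : ℝ) ^ p := by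
    simpa only [add_comm M] using (summable_nat_add_iff M).2 (summable_natCast_succ_rpow hp)
  have hS := summable_natCast_succ_rpow (p := -1 - ε) (by linarith)
  calc ∑' i : ℕ, ((M + i + 1 : ℕ) : ℝ) ^ (-σ - 1)
      ≤ ∑' i : ℕ, ((M + 1 : ℕ) : ℝ) ^ (2 * ε - 1) * ((M + i + 1 : ℕ) : ℝ) ^ (-1 - ε) := by
        refine (hsum (by linarith)).tsum_le_tsum (fun i ↦ ?_) ((hsum (by linarith)).mul_left _)
        calc ((M + i + 1 : ℕ) : ℝ) ^ (-σ - 1)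
            ≤ ((M + i + 1 : ℕ) : ℝ) ^ ((2 * ε - 1) + (-1 - ε)) :=
              Real.rpow_le_rpow_of_exponent_le (by exact_mod_cast (M + i).succ_pos) (by linarith)
          _ = ((M + i + 1 : ℕ) : ℝ) ^ (2 * ε - 1) * ((M + i + 1 : ℕ) : ℝ) ^ (-1 - ε) :=
              Real.rpow_add (by positivity) _ _
          _ ≤ _ := by
              refine mul_le_mul_of_nonneg_right ?_ (by positivity)
              exact Real.rpow_le_rpow_of_nonpos (by positivity) (by gcongr; lia) (by linarith)
    _ = ((M + 1 : ℕ) : ℝ) ^ (2 * ε - 1) * ∑' i : ℕ, ((M + i + 1 : ℕ) : ℝ) ^ (-1 - ε) :=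
        tsum_mul_left
    _ ≤ _ := by
        refine mul_le_mul_of_nonneg_left ?_ (by positivity)
        exact tsum_comp_le_tsum_of_inj hS (fun n ↦ by positivity) (add_right_injective M)

lemma norm_inv_mul_riemannZeta₁_sub_zetaApprox_le {ε : ℝ} (hε : 0 < ε) (hε₂ : ε ≤ 1 / 2) (M : ℕ)
    {s : ℂ} (hs : 1 - ε ≤ s.re) (hs1 : s ≠ 1) :
    ‖(s - 1)⁻¹ * (riemannZeta₁ s - zetaApprox (M + 1) s)‖ ≤
      ‖s‖ * (((M + 1 : ℕ) : ℝ) ^ (2 * ε - 1) * ∑' n : ℕ, ((n + 1 : ℕ) : ℝ) ^ (-1 - ε)) := by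
  rw [norm_mul, norm_inv, inv_mul_le_iff₀ (norm_pos_iff.2 (sub_ne_zero.2 hs1)), ← mul_assoc]
  refine (norm_riemannZeta₁_sub_zetaApprox_le M (by linarith)).trans ?_
  gcongr
  exact tsum_natCast_add_rpow_le hε hε₂ hs M

lemma norm_riemannZeta_le_natCast_rpow {ε : ℝ} (hε : 0 < ε) (hε₂ : ε ≤ 1 / 2) {M : ℕ} {s : ℂ}
    (hs₁ : 1 - ε ≤ s.re) (hs₂ : s.re ≤ 4) (hs₃ : 1 ≤ |s.im|) (hM : |s.im| < (M + 1 : ℕ)) :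
    ‖riemannZeta s‖ ≤
      ((M + 1 : ℕ) : ℝ) ^ (2 * ε) * (1 + 6 * ∑' n : ℕ, ((n + 1 : ℕ) : ℝ) ^ (-1 - ε)) := by
  set S : ℝ := ∑' n : ℕ, ((n + 1 : ℕ) : ℝ) ^ (-1 - ε)
  set N : ℝ := ((M + 1 : ℕ) : ℝ)
  have him : |s.im| ≤ ‖s - 1‖ := by simpa using Complex.abs_im_le_norm (s - 1)
  have hs1 : s - 1 ≠ 0 := norm_pos_iff.1 (by linarith)
  have hs_norm : ‖s‖ ≤ 5 * N := by
    have := Complex.norm_le_abs_re_add_abs_im s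
    have : |s.re| ≤ 4 := abs_le.2 ⟨by linarith, hs₂⟩
    linarith
  have hζ : riemannZeta s = ∑ n ∈ range (M + 1), ((n + 1 : ℕ) : ℂ) ^ (-s)
      + (s - 1)⁻¹ * ((M + 1 : ℕ) : ℂ) ^ (1 - s)
      + (s - 1)⁻¹ * (riemannZeta₁ s - zetaApprox (M + 1) s) := by
    rw [riemannZeta_eq_inv_sub_mul (sub_ne_zero.1 hs1), zetaApprox]
    field_simp
    ring
  have hint : ‖(s - 1)⁻¹ * ((M + 1 : ℕ) : ℂ) ^ (1 - s)‖ ≤ N ^ (2 * ε) := by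
    rw [norm_mul, norm_inv, Complex.norm_natCast_cpow_of_pos M.succ_pos]
    refine (mul_le_of_le_one_left (by positivity) (inv_le_one_of_one_le₀ (by linarith))).trans ?_
    exact Real.rpow_le_rpow_of_exponent_le (by linarith)
      (by rw [Complex.sub_re, Complex.one_re]; linarith)
  have htail : ‖(s - 1)⁻¹ * (riemannZeta₁ s - zetaApprox (M + 1) s)‖ ≤ N ^ (2 * ε) * (5 * S) := by
    calc ‖(s - 1)⁻¹ * (riemannZeta₁ s - zetaApprox (M + 1) s)‖
        ≤ ‖s‖ * (N ^ (2 * ε - 1) * S) :=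
          norm_inv_mul_riemannZeta₁_sub_zetaApprox_le hε hε₂ M hs₁ (sub_ne_zero.1 hs1)
      _ ≤ 5 * N * (N ^ (2 * ε - 1) * S) := by gcongr
      _ = _ := by
          have : N ≠ 0 := by linarith
          rw [Real.rpow_sub_one this]
          field_simp
  calc ‖riemannZeta s‖ ≤ N ^ (2 * ε) * S + N ^ (2 * ε) + N ^ (2 * ε) * (5 * S) := by
        rw [hζ]
        exact norm_add₃_le.trans (by gcongr; exact norm_sum_range_cpow_neg_le hε _ hs₁)
    _ = N ^ (2 * ε) * (1 + 6 * S) := by ring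

lemma two_mul_rpow_le {t p : ℝ} (ht : 0 ≤ t) (hp : p ≤ 1) : (2 * t) ^ p ≤ 2 * t ^ p := by
  rw [Real.mul_rpow (by norm_num) ht]
  gcongr
  exact Real.rpow_le_self_of_one_le (by norm_num) hp

theorem exists_norm_riemannZeta_le {ε : ℝ} (hε : 0 < ε) (hε₂ : ε ≤ 1 / 2) :
    ∃ C > 0, ∀ s : ℂ, 1 - ε ≤ s.re → s.re ≤ 4 → 1 ≤ |s.im| →
      ‖riemannZeta s‖ ≤ C * |s.im| ^ (2 * ε) := by
  set S : ℝ := ∑' n : ℕ, ((n + 1 : ℕ) : ℝ) ^ (-1 - ε)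
  have : 0 ≤ S := tsum_nonneg fun n ↦ by positivity
  refine ⟨2 * (1 + 6 * S), by positivity, fun s hs₁ hs₂ hs₃ ↦ ?_⟩
  set M : ℕ := ⌊|s.im|⌋₊
  have hlt : |s.im| < (M + 1 : ℕ) := by simpa using Nat.lt_floor_add_one |s.im|
  have hle : ((M + 1 : ℕ) : ℝ) ≤ 2 * |s.im| := by
    have := Nat.floor_le (abs_nonneg s.im)
    push_cast
    linarith
  calc ‖riemannZeta s‖ ≤ ((M + 1 : ℕ) : ℝ) ^ (2 * ε) * (1 + 6 * S) :=
        norm_riemannZeta_le_natCast_rpow hε hε₂ hs₁ hs₂ hs₃ hlt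
    _ ≤ (2 * |s.im|) ^ (2 * ε) * (1 + 6 * S) := by gcongr
    _ ≤ 2 * |s.im| ^ (2 * ε) * (1 + 6 * S) := by
        gcongr
        exact two_mul_rpow_le (abs_nonneg _) (by linarith)
    _ = _ := by ring

theorem exists_norm_deriv_riemannZeta_le {ε : ℝ} (hε : 0 < ε) (hε₂ : ε ≤ 1 / 2) :
    ∃ D ≥ 1, ∀ s : ℂ, 1 - ε / 2 ≤ s.re → s.re ≤ 3 → 2 ≤ |s.im| →
      ‖deriv riemannZeta s‖ ≤ D * |s.im| ^ (2 * ε) := by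
  obtain ⟨C, hC, hζ⟩ := exists_norm_riemannZeta_le hε hε₂
  refine ⟨max 1 (C * 2 / (ε / 2)), le_max_left _ _, fun s hs₁ hs₂ hs₃ ↦ ?_⟩
  have hε' : 0 < ε / 2 := by positivity
  have him {z : ℂ} (hz : z ∈ Metric.closedBall s (ε / 2)) : |z.im - s.im| ≤ ε / 2 :=
    (Complex.abs_im_le_norm (z - s)).trans (mem_closedBall_iff_norm.1 hz)
  have hsphere : ∀ z ∈ Metric.sphere s (ε / 2), ‖riemannZeta z‖ ≤ C * (2 * |s.im| ^ (2 * ε)) := by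
    intro z hz
    have hz' := Metric.sphere_subset_closedBall hz
    have hre : |z.re - s.re| ≤ ε / 2 :=
      (Complex.abs_re_le_norm (z - s)).trans (mem_closedBall_iff_norm.1 hz')
    obtain ⟨hre₁, hre₂⟩ := abs_le.1 hre
    have h₁ := abs_sub_abs_le_abs_sub z.im s.im
    have h₂ := abs_sub_abs_le_abs_sub s.im z.im
    rw [abs_sub_comm] at h₂
    have := him hz'
    refine (hζ z (by linarith) (by linarith) (by linarith)).trans ?_
    gcongr
    refine le_trans ?_ (two_mul_rpow_le (abs_nonneg s.im) (by linarith))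
    gcongr
    linarith
  have hdiff : DiffContOnCl ℂ riemannZeta (Metric.ball s (ε / 2)) := by
    refine DifferentiableOn.diffContOnCl fun z hz ↦ ?_
    rw [closure_ball _ hε'.ne'] at hz
    refine (differentiableAt_riemannZeta ?_).differentiableWithinAt
    rintro rfl
    have := him hz
    rw [Complex.one_im, zero_sub, abs_neg] at this
    linarith
  calc ‖deriv riemannZeta s‖
      ≤ C * (2 * |s.im| ^ (2 * ε)) / (ε / 2) :=
        Complex.norm_deriv_le_of_forall_mem_sphere_norm_le hε' hdiff hsphere
    _ = C * 2 / (ε / 2) * |s.im| ^ (2 * ε) := by ring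
    _ ≤ _ := by
        gcongr
        exact le_max_right _ _

lemma exists_norm_riemannZeta_sub_le {ε : ℝ} (hε : 0 < ε) (hε₂ : ε ≤ 1 / 2) :
    ∃ D ≥ 1, ∀ s s' : ℂ, s.re ∈ Set.Icc (1 - ε / 2) 3 → s'.re ∈ Set.Icc (1 - ε / 2) 3 →
      s'.im = s.im → 2 ≤ |s.im| →
      ‖riemannZeta s' - riemannZeta s‖ ≤ D * |s.im| ^ (2 * ε) * ‖s' - s‖ := by
  obtain ⟨D, hD, hderiv⟩ := exists_norm_deriv_riemannZeta_le hε hε₂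
  refine ⟨D, hD, fun s s' hs hs' him h2 ↦ ?_⟩
  set U : Set ℂ := Complex.re ⁻¹' Set.Icc (1 - ε / 2) 3 ∩ Complex.im ⁻¹' {s.im}
  have hU : Convex ℝ U :=
    ((convex_Icc _ _).linear_preimage Complex.reLm).inter
      ((convex_singleton _).linear_preimage Complex.imLm)
  refine hU.norm_image_sub_le_of_norm_deriv_le (fun z hz ↦ differentiableAt_riemannZeta ?_)
    (fun z hz ↦ ?_) ⟨hs, rfl⟩ ⟨hs', him⟩
  · rintro rfl
    rw [← (show (1 : ℂ).im = s.im from hz.2), Complex.one_im, abs_zero] at h2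
    linarith
  · have hz_im : z.im = s.im := hz.2
    rw [← hz_im] at h2 ⊢
    exact hderiv z hz.1.1 hz.1.2 h2

lemma exists_norm_riemannZeta_one_add_le :
    ∃ A > 0, ∀ x : ℝ, 0 < x → x ≤ 1 → ‖riemannZeta (1 + x)‖ ≤ A / x := by
  have hcont : Continuous fun x : ℝ ↦ riemannZeta₁ (1 + x) :=
    differentiable_riemannZeta₁.continuous.comp (by fun_prop)
  obtain ⟨A, hA⟩ := (isCompact_Icc (a := (0 : ℝ)) (b := 1)).exists_bound_of_continuousOn
    hcont.continuousOn
  refine ⟨max 1 A, by positivity, fun x hx hx1 ↦ ?_⟩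
  have hne : 1 + (x : ℂ) ≠ 1 := by simpa using hx.ne'
  rw [riemannZeta_eq_inv_sub_mul hne, norm_mul, norm_inv, add_sub_cancel_left, Complex.norm_real,
    Real.norm_of_nonneg hx.le, div_eq_inv_mul]
  gcongr
  exact (hA x ⟨hx.le, hx1⟩).trans (le_max_right _ _)

lemma one_le_norm_riemannZeta_product {x : ℝ} (hx : 0 < x) (y : ℝ) :
    1 ≤ ‖riemannZeta (1 + x)‖ ^ 3 * ‖riemannZeta (1 + x + Complex.I * y)‖ ^ 4 *
      ‖riemannZeta (1 + x + 2 * Complex.I * y)‖ := by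
  simpa [DirichletCharacter.LFunctionTrivChar, DirichletCharacter.LFunction_modOne_eq] using
    DirichletCharacter.norm_LFunction_product_ge_one (1 : DirichletCharacter ℂ 1) hx y

lemma exists_pow_le_norm_riemannZeta_pow {ε : ℝ} (hε : 0 < ε) (hε₂ : ε ≤ 1 / 2) :
    ∃ a > 0, ∀ x y : ℝ, 0 < x → x ≤ 1 → 1 ≤ |y| →
      a * x ^ 3 ≤ ‖riemannZeta (1 + x + Complex.I * y)‖ ^ 4 * |y| ^ (2 * ε) := by
  obtain ⟨C, hC, hζ⟩ := exists_norm_riemannZeta_le hε hε₂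
  obtain ⟨A, hA, hζ_real⟩ := exists_norm_riemannZeta_one_add_le
  refine ⟨1 / (A ^ 3 * (2 * C)), by positivity, fun x y hx hx1 hy ↦ ?_⟩
  have him : |(1 + x + 2 * Complex.I * y : ℂ).im| = 2 * |y| := by simp [abs_mul]
  have hdouble : ‖riemannZeta (1 + x + 2 * Complex.I * y)‖ ≤ C * (2 * |y| ^ (2 * ε)) := by
    refine (hζ _ (by simp; linarith) (by simp; linarith) (by rw [him]; linarith)).trans ?_
    rw [him]
    gcongr
    exact two_mul_rpow_le (abs_nonneg y) (by linarith)
  rw [div_mul_eq_mul_div, one_mul, div_le_iff₀ (by positivity)]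
  calc x ^ 3
      ≤ x ^ 3 * ((A / x) ^ 3 * ‖riemannZeta (1 + x + Complex.I * y)‖ ^ 4 *
          (C * (2 * |y| ^ (2 * ε)))) := by
        refine le_mul_of_one_le_right (by positivity)
          ((one_le_norm_riemannZeta_product hx y).trans ?_)
        gcongr
        exact hζ_real x hx hx1
    _ = _ := by field_simp

lemma three_mul_le_of_mul_pow_le {a c D ε t x Z : ℝ} (hc : 0 < c) (ht : 0 < t)
    (hZ : 0 ≤ Z) (hca : 81 * D ^ 4 * c ≤ a) (hx : c * t ^ (-(10 * ε)) ≤ x)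
    (h : a * x ^ 3 ≤ Z ^ 4 * t ^ (2 * ε)) :
    3 * (c * t ^ (-(10 * ε))) * (D * t ^ (2 * ε)) ≤ Z := by
  have hexp : t ^ (2 * ε) * (t ^ (2 * ε)) ^ 4 * t ^ (-(10 * ε)) = 1 := by
    rw [← Real.rpow_natCast, ← Real.rpow_mul ht.le, ← Real.rpow_add ht, ← Real.rpow_add ht,
      show 2 * ε + 2 * ε * (4 : ℕ) + -(10 * ε) = 0 by push_cast; ring, Real.rpow_zero]
  refine le_of_pow_le_pow_left₀ four_ne_zero hZ
    (le_of_mul_le_mul_right ?_ (show 0 < t ^ (2 * ε) by positivity))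
  calc (3 * (c * t ^ (-(10 * ε))) * (D * t ^ (2 * ε))) ^ 4 * t ^ (2 * ε)
      = 81 * D ^ 4 * c * (c * t ^ (-(10 * ε))) ^ 3 *
          (t ^ (2 * ε) * (t ^ (2 * ε)) ^ 4 * t ^ (-(10 * ε))) := by ring
    _ ≤ a * x ^ 3 := by
        have : 0 ≤ a := le_trans (by positivity) hca
        rw [hexp, mul_one]
        gcongr
    _ ≤ _ := h

theorem exists_le_norm_riemannZeta {ε : ℝ} (hε : 0 < ε) (hε₂ : ε ≤ 1 / 2) :
    ∃ c > 0, c ≤ ε / 2 ∧ ∀ s : ℂ, 2 ≤ |s.im| → 1 - c * |s.im| ^ (-(10 * ε)) ≤ s.re → s.re ≤ 2 →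
      c * |s.im| ^ (-(10 * ε)) ≤ ‖riemannZeta s‖ := by
  obtain ⟨a, ha, hpow⟩ := exists_pow_le_norm_riemannZeta_pow hε hε₂
  obtain ⟨D, hD, hsub⟩ := exists_norm_riemannZeta_sub_le hε hε₂
  set c : ℝ := min (ε / 2) (a / (81 * D ^ 4))
  have hc0 : 0 < c := by positivity
  have hcε : c ≤ ε / 2 := min_le_left _ _
  have hca : 81 * D ^ 4 * c ≤ a := by
    rw [mul_comm, ← le_div_iff₀ (by positivity)]
    exact min_le_right _ _
  refine ⟨c, hc0, hcε, fun s him hlo hhi ↦ ?_⟩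
  set t := |s.im|
  have ht0 : 0 < t := by linarith
  set η := c * t ^ (-(10 * ε))
  have hη0 : 0 < η := by positivity
  have hηc : η ≤ c := mul_le_of_le_one_right hc0.le
    (Real.rpow_le_one_of_one_le_of_nonpos (by linarith) (by linarith))
  have hDt : 1 ≤ D * t ^ (2 * ε) :=
    one_le_mul_of_one_le_of_one_le hD (Real.one_le_rpow (by linarith) (by linarith))
  have hright : ∀ x : ℝ, η ≤ x → x ≤ 1 →
      3 * η * (D * t ^ (2 * ε)) ≤ ‖riemannZeta (1 + x + Complex.I * s.im)‖ := fun x hx hx1 ↦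
    three_mul_le_of_mul_pow_le hc0 ht0 (norm_nonneg _) hca hx
      (hpow x s.im (by linarith) hx1 (by linarith))
  rcases le_total (1 + η) s.re with hcase | hcase
  · have h := hright (s.re - 1) (by linarith) (by linarith)
    rw [show (1 : ℂ) + ((s.re - 1 : ℝ) : ℂ) + Complex.I * s.im = s by
      apply Complex.ext <;> simp] at h
    nlinarith
  · set s' : ℂ := 1 + η + Complex.I * s.im
    have hre : s'.re = 1 + η := by simp [s']
    have him' : s'.im = s.im := by simp [s']
    have hdist : ‖s' - s‖ ≤ 2 * η := by
      rw [← Complex.abs_re_eq_norm.2 (by rw [Complex.sub_im, him', sub_self]), Complex.sub_re, hre,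
        abs_of_nonneg (by linarith)]
      linarith
    have hmv : ‖riemannZeta s' - riemannZeta s‖ ≤ D * t ^ (2 * ε) * (2 * η) :=
      (hsub s s' ⟨by linarith, by linarith⟩ (by rw [hre]; constructor <;> linarith) him' him).trans
        (by gcongr)
    have h := hright η le_rfl (by linarith)
    have htri := norm_sub_norm_le (riemannZeta s') (riemannZeta s)
    nlinarith

/-- The function `-ζ'/ζ - ζ`, whose Dirichlet series is `∑ (Λ n - 1) n⁻ˢ`. The double poles at
`s = 1` cancel, so it is written through the entire functions `riemannZeta₁` (which is
`(s - 1) ζ(s)`) and `riemannZeta₀` (which is `ζ(s) - 1 / (s - 1)`) and is regular at `s = 1`. -/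
noncomputable def zetaRemainder (s : ℂ) : ℂ :=
  -(deriv riemannZeta₁ s / riemannZeta₁ s) - riemannZeta₀ s

lemma riemannZeta₁_ne_zero {s : ℂ} (hs : s = 1 ∨ riemannZeta s ≠ 0) : riemannZeta₁ s ≠ 0 := by
  rcases eq_or_ne s 1 with rfl | h
  · simp
  · rw [riemannZeta_eq_inv_sub_mul h] at hs
    exact right_ne_zero_of_mul (hs.resolve_left h)

lemma zetaRemainder_eq {s : ℂ} (hs : s ≠ 1) (hζ : riemannZeta s ≠ 0) :
    zetaRemainder s = -(deriv riemannZeta s / riemannZeta s) - riemannZeta s := by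
  have hs1 : s - 1 ≠ 0 := sub_ne_zero.2 hs
  have hζ₁ := riemannZeta₁_ne_zero (Or.inr hζ)
  have hζ₀ : riemannZeta₀ s = riemannZeta s - (s - 1)⁻¹ := by
    rw [riemannZeta_eq_inv_sub_add hs, add_sub_cancel_left]
  rw [zetaRemainder, hζ₀, deriv_riemannZeta_eq_neg_inv_sub_sq_mul_add hs,
    riemannZeta_eq_inv_sub_mul hs]
  field_simp
  ring

lemma analyticAt_zetaRemainder {s : ℂ} (hs : riemannZeta₁ s ≠ 0) :
    AnalyticAt ℂ zetaRemainder s :=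
  have h₁ := differentiable_riemannZeta₁.analyticAt s
  (h₁.deriv.div h₁ hs).neg.sub (differentiable_riemannZeta₀.analyticAt s)

lemma exists_norm_zetaRemainder_le {ε : ℝ} (hε : 0 < ε) (hε₂ : ε ≤ 1 / 2) :
    ∃ c > 0, c ≤ 1 / 4 ∧ ∃ B ≥ 0, ∀ s : ℂ, 2 ≤ |s.im| → 1 - c * |s.im| ^ (-(10 * ε)) ≤ s.re →
      s.re ≤ 2 → riemannZeta₁ s ≠ 0 ∧ ‖zetaRemainder s‖ ≤ B * |s.im| ^ (12 * ε) := by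
  obtain ⟨C, hC, hupper⟩ := exists_norm_riemannZeta_le hε hε₂
  obtain ⟨D, hD, hderiv⟩ := exists_norm_deriv_riemannZeta_le hε hε₂
  obtain ⟨c, hc, hcε, hlower⟩ := exists_le_norm_riemannZeta hε hε₂
  refine ⟨c, hc, by linarith, D / c + C, by positivity, fun s him hlo hhi ↦ ?_⟩
  have ht0 : 0 < |s.im| := by linarith
  have hlower_s := hlower s him hlo hhi
  have hζ : riemannZeta s ≠ 0 := norm_pos_iff.1 ((by positivity : _ < _).trans_le hlower_s)
  have hs1 : s ≠ 1 := by rintro rfl; norm_num at him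
  have hre : 1 - ε / 2 ≤ s.re := by
    have := mul_le_of_le_one_right hc.le
      (Real.rpow_le_one_of_one_le_of_nonpos (by linarith : 1 ≤ |s.im|)
        (by linarith : -(10 * ε) ≤ 0))
    linarith
  have hlogDeriv : ‖deriv riemannZeta s / riemannZeta s‖ ≤ D / c * |s.im| ^ (12 * ε) := by
    rw [norm_div]
    calc ‖deriv riemannZeta s‖ / ‖riemannZeta s‖
        ≤ D * |s.im| ^ (2 * ε) / (c * |s.im| ^ (-(10 * ε))) := by
          gcongr
          exact hderiv s hre (by linarith) him
      _ = D / c * (|s.im| ^ (2 * ε) / |s.im| ^ (-(10 * ε))) := by field_simp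
      _ = D / c * |s.im| ^ (12 * ε) := by rw [← Real.rpow_sub ht0]; ring_nf
  have hζ_le : ‖riemannZeta s‖ ≤ C * |s.im| ^ (12 * ε) :=
    (hupper s (by linarith) (by linarith) (by linarith)).trans <|
      mul_le_mul_of_nonneg_left (Real.rpow_le_rpow_of_exponent_le (by linarith) (by linarith)) hC.le
  refine ⟨riemannZeta₁_ne_zero (Or.inr hζ), ?_⟩
  rw [zetaRemainder_eq hs1 hζ, add_mul]
  exact (norm_sub_le _ _).trans (add_le_add (by rwa [norm_neg]) hζ_le)

lemma mem_zeroFreeRegion_of_mem_closedBall {c p : ℝ} (hc : 0 < c) (hc₄ : c ≤ 1 / 4) (hp : 0 ≤ p)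
    {s z : ℂ} (hs₁ : 1 ≤ s.re) (hs₂ : s.re ≤ 3 / 2) (him : 3 ≤ |s.im|)
    (hz : z ∈ Metric.closedBall s (c * (2 * |s.im|) ^ (-p))) :
    2 ≤ |z.im| ∧ |z.im| ≤ 2 * |s.im| ∧ 1 - c * |z.im| ^ (-p) ≤ z.re ∧ z.re ≤ 2 := by
  rw [mem_closedBall_iff_norm] at hz
  have hradius : c * (2 * |s.im|) ^ (-p) ≤ c := mul_le_of_le_one_right hc.le
    (Real.rpow_le_one_of_one_le_of_nonpos (by linarith) (by linarith))
  have hre : |z.re - s.re| ≤ c * (2 * |s.im|) ^ (-p) := (Complex.abs_re_le_norm (z - s)).trans hz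
  have him' : |z.im - s.im| ≤ c * (2 * |s.im|) ^ (-p) := (Complex.abs_im_le_norm (z - s)).trans hz
  obtain ⟨hre₁, hre₂⟩ := abs_le.1 hre
  have h₁ := abs_sub_abs_le_abs_sub z.im s.im
  have h₂ := abs_sub_abs_le_abs_sub s.im z.im
  rw [abs_sub_comm] at h₂
  have hupper : |z.im| ≤ 2 * |s.im| := by linarith
  refine ⟨by linarith, hupper, ?_, by linarith⟩
  have : c * (2 * |s.im|) ^ (-p) ≤ c * |z.im| ^ (-p) :=
    mul_le_mul_of_nonneg_left (Real.rpow_le_rpow_of_nonpos (by linarith) hupper (by linarith)) hc.le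
  linarith

lemma exists_norm_iteratedDeriv_zetaRemainder_le_of_three_le_abs_im (N : ℕ) {ε : ℝ} (hε : 0 < ε)
    (hε₂ : ε ≤ 1 / 2) :
    ∃ C ≥ 0, ∀ s : ℂ, 1 ≤ s.re → s.re ≤ 3 / 2 → 3 ≤ |s.im| →
      ‖iteratedDeriv N zetaRemainder s‖ ≤ C * (2 * |s.im|) ^ (12 * ε + 10 * ε * N) := by
  obtain ⟨c, hc, hc₄, B, hB, hbound⟩ := exists_norm_zetaRemainder_le hε hε₂
  refine ⟨N.factorial * B / c ^ N, by positivity, fun s hs₁ hs₂ him ↦ ?_⟩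
  have ht0 : 0 < 2 * |s.im| := by linarith
  set R : ℝ := c * (2 * |s.im|) ^ (-(10 * ε)) with hR
  have hR0 : 0 < R := by positivity
  have hregion {z : ℂ} (hz : z ∈ Metric.closedBall s R) :=
    mem_zeroFreeRegion_of_mem_closedBall hc hc₄ (by positivity) hs₁ hs₂ him hz
  have hsphere : ∀ z ∈ Metric.sphere s R, ‖zetaRemainder z‖ ≤ B * (2 * |s.im|) ^ (12 * ε) := by
    intro z hz
    obtain ⟨him_z, hle, hlo, hhi⟩ := hregion (Metric.sphere_subset_closedBall hz)
    refine (hbound z him_z hlo hhi).2.trans ?_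
    gcongr
  have hdiff : DiffContOnCl ℂ zetaRemainder (Metric.ball s R) := by
    refine DifferentiableOn.diffContOnCl fun z hz ↦ ?_
    rw [closure_ball _ hR0.ne'] at hz
    obtain ⟨him_z, -, hlo, hhi⟩ := hregion hz
    exact (analyticAt_zetaRemainder
      (hbound z him_z hlo hhi).1).differentiableAt.differentiableWithinAt
  have hR_pow : R ^ N = c ^ N * (2 * |s.im|) ^ (-(10 * ε * N)) := by
    rw [hR, mul_pow, ← Real.rpow_mul_natCast ht0.le, neg_mul]
  calc ‖iteratedDeriv N zetaRemainder s‖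
      ≤ N.factorial * (B * (2 * |s.im|) ^ (12 * ε)) / R ^ N :=
        Complex.norm_iteratedDeriv_le_of_forall_mem_sphere_norm_le N hR0 hdiff hsphere
    _ = _ := by
        rw [hR_pow, Real.rpow_neg ht0.le, Real.rpow_add ht0]
        field_simp

theorem exists_norm_iteratedDeriv_zetaRemainder_le (N : ℕ) {δ : ℝ} (hδ : 0 < δ) :
    ∃ C ≥ 0, ∀ s : ℂ, 1 ≤ s.re → s.re ≤ 3 / 2 →
      ‖iteratedDeriv N zetaRemainder s‖ ≤ C * (1 + |s.im|) ^ δ := by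
  set ε : ℝ := min (1 / 2) (δ / (12 + 10 * N))
  have hε : 0 < ε := by positivity
  have hexp : 12 * ε + 10 * ε * N ≤ δ := by
    have : ε * (12 + 10 * N) ≤ δ := (le_div_iff₀ (by positivity)).1 (min_le_right _ _)
    linarith
  obtain ⟨C, hC, hlarge⟩ :=
    exists_norm_iteratedDeriv_zetaRemainder_le_of_three_le_abs_im N hε (min_le_left _ _)
  have hcont : ContinuousOn (iteratedDeriv N zetaRemainder)
      (Set.Icc 1 (3 / 2) ×ℂ Set.Icc (-3) 3) := by
    intro z hz
    rw [iteratedDeriv_eq_iterate]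
    have hζ₁ := riemannZeta₁_ne_zero (Or.inr (riemannZeta_ne_zero_of_one_le_re hz.1.1))
    exact ((analyticAt_zetaRemainder hζ₁).iterated_deriv N).continuousAt.continuousWithinAt
  obtain ⟨B, hB⟩ := (isCompact_Icc.reProdIm isCompact_Icc).exists_bound_of_continuousOn hcont
  refine ⟨max B (C * 2 ^ δ), le_max_of_le_right (by positivity), fun s hs₁ hs₂ ↦ ?_⟩
  rcases le_total 3 |s.im| with him | him
  · calc ‖iteratedDeriv N zetaRemainder s‖
        ≤ C * (2 * |s.im|) ^ (12 * ε + 10 * ε * N) := hlarge s hs₁ hs₂ him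
      _ ≤ C * (2 * (1 + |s.im|)) ^ δ := by
          gcongr ?_ * ?_
          refine (Real.rpow_le_rpow_of_exponent_le (by linarith) hexp).trans ?_
          gcongr
          linarith
      _ = C * 2 ^ δ * (1 + |s.im|) ^ δ := by
          rw [Real.mul_rpow zero_le_two (by positivity), mul_assoc]
      _ ≤ _ := by
          gcongr
          exact le_max_right _ _
  · have hB0 : 0 ≤ B := (norm_nonneg _).trans (hB s ⟨⟨hs₁, hs₂⟩, abs_le.1 him⟩)
    calc ‖iteratedDeriv N zetaRemainder s‖ ≤ B := hB s ⟨⟨hs₁, hs₂⟩, abs_le.1 him⟩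
      _ ≤ B * (1 + |s.im|) ^ δ :=
          le_mul_of_one_le_right hB0 (Real.one_le_rpow (by simp) hδ.le)
      _ ≤ _ := by
          gcongr
          exact le_max_left _ _

/-! ### A smoothed Perron formula -/

/-- The Riesz weight `t ↦ max (1 - t) 0` on the positive half-line. -/
noncomputable def rieszWeight : ℝ → ℂ :=
  (Set.Ioc 0 1).indicator fun t : ℝ ↦ 1 - (t : ℂ)

/-- The Mellin transform `s ↦ 1 / (s (s + 1))` of the Riesz weight. -/
noncomputable def rieszKernel (s : ℂ) : ℂ :=
  1 / (s * (s + 1))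

lemma rieszWeight_of_pos {t : ℝ} (ht : 0 < t) : rieszWeight t = (max (1 - t) 0 : ℝ) := by
  rcases le_or_gt t 1 with h | h
  · rw [rieszWeight, Set.indicator_of_mem (Set.mem_Ioc.2 ⟨ht, h⟩), max_eq_left (by linarith)]
    push_cast
    rfl
  · rw [rieszWeight, Set.indicator_of_notMem fun h' ↦ h.not_ge h'.2, max_eq_right (by linarith),
      Complex.ofReal_zero]

lemma hasMellin_rieszWeight {s : ℂ} (hs : 0 < s.re) :
    HasMellin rieszWeight s (rieszKernel s) := by
  have h₁ := hasMellin_one_Ioc hs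
  have h₂ := hasMellin_cpow_Ioc 1 (s := s) (by rw [Complex.one_re]; linarith)
  have hs0 : s ≠ 0 := by rintro rfl; simp at hs
  have hs1 : s + 1 ≠ 0 := fun h ↦ by
    have := congrArg Complex.re h
    rw [Complex.add_re, Complex.one_re, Complex.zero_re] at this
    linarith
  have hweight : rieszWeight = fun t ↦ (Set.Ioc 0 1).indicator (fun _ ↦ (1 : ℂ)) t -
      (Set.Ioc 0 1).indicator (fun t : ℝ ↦ (t : ℂ) ^ (1 : ℂ)) t := by
    ext t
    by_cases ht : t ∈ Set.Ioc (0 : ℝ) 1 <;> simp [rieszWeight, ht]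
  have hkernel : rieszKernel s = 1 / s - 1 / (s + 1) := by
    rw [rieszKernel]
    field_simp
    ring
  have hsub := hasMellin_sub h₁.1 h₂.1
  rwa [h₁.2, h₂.2, ← hkernel, ← hweight] at hsub

lemma norm_rieszKernel_le {σ : ℝ} (hσ : 1 ≤ σ) (t : ℝ) :
    ‖rieszKernel (σ + t * Complex.I)‖ ≤ 4 * (1 + ‖t‖) ^ (-2 : ℝ) := by
  have hnorm (τ : ℝ) (hτ : 1 ≤ τ) : (1 + ‖t‖) / 2 ≤ ‖(τ + t * Complex.I : ℂ)‖ := by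
    have hre := Complex.abs_re_le_norm (τ + t * Complex.I)
    have him := Complex.abs_im_le_norm (τ + t * Complex.I)
    simp only [Complex.add_re, Complex.add_im, Complex.re_ofReal_mul, Complex.im_ofReal_mul,
      Complex.I_re, Complex.I_im, Complex.ofReal_re, Complex.ofReal_im, mul_zero, add_zero,
      mul_one, zero_add] at hre him
    rw [Real.norm_eq_abs]
    linarith [le_abs_self τ]
  have h₁ := hnorm σ hσ
  have h₂ := hnorm (σ + 1) (by linarith)
  rw [Complex.ofReal_add, Complex.ofReal_one, add_right_comm] at h₂
  rw [rieszKernel, norm_div, norm_mul, norm_one, Real.rpow_neg (by positivity), Real.rpow_two]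
  calc 1 / (‖(σ + t * Complex.I : ℂ)‖ * ‖(σ + t * Complex.I + 1 : ℂ)‖)
      ≤ 1 / ((1 + ‖t‖) / 2 * ((1 + ‖t‖) / 2)) := by gcongr
    _ = 4 * ((1 + ‖t‖) ^ 2)⁻¹ := by field_simp; norm_num

lemma continuous_rieszKernel {σ : ℝ} (hσ : 1 ≤ σ) :
    Continuous fun t : ℝ ↦ rieszKernel (σ + t * Complex.I) := by
  refine continuous_const.div (by fun_prop) fun t ↦ mul_ne_zero (fun h ↦ ?_) fun h ↦ ?_ <;>
  · have := congrArg Complex.re h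
    simp at this
    linarith

lemma integrable_rieszKernel {σ : ℝ} (hσ : 1 ≤ σ) :
    Integrable fun t : ℝ ↦ rieszKernel (σ + t * Complex.I) :=
  ((integrable_one_add_norm (E := ℝ) (μ := volume) (r := 2) (by simp)).const_mul 4).mono'
    (continuous_rieszKernel hσ).aestronglyMeasurable (.of_forall (norm_rieszKernel_le hσ))

lemma integral_cpow_neg_mul_rieszKernel {σ : ℝ} (hσ : 1 ≤ σ) {y : ℝ} (hy : 0 < y) :
    ∫ t : ℝ, (y : ℂ) ^ (-(σ + t * Complex.I : ℂ)) * rieszKernel (σ + t * Complex.I)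
      = 2 * Real.pi * rieszWeight y := by
  have hmellin (t : ℝ) :
      mellin rieszWeight (σ + t * Complex.I) = rieszKernel (σ + t * Complex.I) :=
    (hasMellin_rieszWeight (by simp; linarith)).2
  have hcont : ContinuousAt rieszWeight y := by
    refine ContinuousAt.congr (f := fun t : ℝ ↦ ((max (1 - t) 0 : ℝ) : ℂ)) (by fun_prop) ?_
    filter_upwards [lt_mem_nhds hy] with t ht
    rw [rieszWeight_of_pos ht]
  have hvert : Complex.VerticalIntegrable (mellin rieszWeight) σ := by
    simpa only [Complex.VerticalIntegrable, hmellin] using integrable_rieszKernel hσ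
  have hinv := mellinInv_mellin_eq σ rieszWeight hy
    (hasMellin_rieszWeight (by simp; linarith)).1 hvert hcont
  simp only [mellinInv, hmellin, smul_eq_mul, Complex.real_smul] at hinv
  rw [← hinv]
  generalize (∫ t : ℝ, (y : ℂ) ^ (-(σ + t * Complex.I : ℂ)) * rieszKernel (σ + t * Complex.I)) = J
  push_cast
  field_simp

lemma integral_term_mul_rieszKernel {σ : ℝ} (hσ : 1 ≤ σ) (a : ℕ → ℂ) {x : ℝ} (hx : 0 < x) (n : ℕ) :
    ∫ t : ℝ, LSeries.term a (σ + t * Complex.I) n *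
        ((x : ℂ) ^ (σ + t * Complex.I : ℂ) * rieszKernel (σ + t * Complex.I))
      = 2 * Real.pi * (a n * rieszWeight (n / x)) := by
  rcases eq_or_ne n 0 with rfl | hn
  · simp [rieszWeight]
  have hcpow (s : ℂ) : (((n / x : ℝ)) : ℂ) ^ (-s) = (x : ℂ) ^ s / (n : ℂ) ^ s := by
    rw [← Complex.ofReal_natCast, Complex.ofReal_div,
      Complex.div_cpow_ofReal_nonneg n.cast_nonneg hx.le, Complex.cpow_neg, Complex.cpow_neg]
    field_simp
  have hterm (t : ℝ) : LSeries.term a (σ + t * Complex.I) n *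
      ((x : ℂ) ^ (σ + t * Complex.I : ℂ) * rieszKernel (σ + t * Complex.I))
      = a n * (((n / x : ℝ) : ℂ) ^ (-(σ + t * Complex.I : ℂ)) *
        rieszKernel (σ + t * Complex.I)) := by
    rw [LSeries.term_of_ne_zero hn, hcpow]
    ring
  simp_rw [hterm]
  rw [integral_const_mul, integral_cpow_neg_mul_rieszKernel hσ (by positivity)]
  ring

lemma norm_term_mul_rieszKernel (a : ℕ → ℂ) (σ : ℝ) {x : ℝ} (hx : 0 < x) (n : ℕ) (t : ℝ) :
    ‖LSeries.term a (σ + t * Complex.I) n *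
        ((x : ℂ) ^ (σ + t * Complex.I : ℂ) * rieszKernel (σ + t * Complex.I))‖
      = ‖LSeries.term a σ n‖ * x ^ σ * ‖rieszKernel (σ + t * Complex.I)‖ := by
  have hre : (σ + t * Complex.I).re = σ := by simp
  rw [norm_mul, norm_mul, Complex.norm_cpow_eq_rpow_re_of_pos hx, LSeries.norm_term_eq,
    LSeries.norm_term_eq, hre, Complex.ofReal_re, mul_assoc]

lemma integrable_term_mul_rieszKernel {σ : ℝ} (hσ : 1 ≤ σ) (a : ℕ → ℂ)
    {x : ℝ} (hx : 0 < x) (n : ℕ) :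
    Integrable fun t : ℝ ↦ LSeries.term a (σ + t * Complex.I) n *
      ((x : ℂ) ^ (σ + t * Complex.I : ℂ) * rieszKernel (σ + t * Complex.I)) := by
  refine ((integrable_rieszKernel hσ).norm.const_mul (‖LSeries.term a σ n‖ * x ^ σ)).mono'
    (Continuous.aestronglyMeasurable ?_)
    (.of_forall fun t ↦ (norm_term_mul_rieszKernel a σ hx n t).le)
  have hcpow {y : ℂ} (hy : y ≠ 0) : Continuous fun t : ℝ ↦ y ^ (σ + t * Complex.I : ℂ) :=
    Continuous.const_cpow (by fun_prop) (Or.inl hy)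
  refine Continuous.mul ?_
    ((hcpow (Complex.ofReal_ne_zero.2 hx.ne')).mul (continuous_rieszKernel hσ))
  rcases eq_or_ne n 0 with rfl | hn
  · simpa only [LSeries.term_zero] using continuous_const
  · have hn' : (n : ℂ) ≠ 0 := Nat.cast_ne_zero.2 hn
    simp only [LSeries.term_of_ne_zero hn]
    exact continuous_const.div (hcpow hn') fun t ↦ by simp [Complex.cpow_eq_zero_iff, hn']

theorem two_pi_mul_tsum_mul_rieszWeight {σ : ℝ} (hσ : 1 ≤ σ) {a : ℕ → ℂ}
    (ha : LSeriesSummable a σ) {x : ℝ} (hx : 0 < x) :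
    2 * Real.pi * ∑' n : ℕ, a n * rieszWeight (n / x)
      = ∫ t : ℝ, LSeries a (σ + t * Complex.I) *
          ((x : ℂ) ^ (σ + t * Complex.I : ℂ) * rieszKernel (σ + t * Complex.I)) := by
  have hsum := hasSum_integral_of_summable_integral_norm
    (integrable_term_mul_rieszKernel hσ a hx) (by
      simp_rw [norm_term_mul_rieszKernel a σ hx, integral_const_mul]
      exact (ha.norm.mul_right _).mul_right _)
  simp_rw [integral_term_mul_rieszKernel hσ a hx, tsum_mul_right] at hsum
  rw [← tsum_mul_left, hsum.tsum_eq]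
  rfl

lemma norm_tsum_mul_rieszWeight_le {σ : ℝ} (hσ : 1 ≤ σ) {a : ℕ → ℂ}
    (ha : LSeriesSummable a σ) {x C : ℝ} (hx : 0 < x)
    (hC : ∀ t : ℝ, ‖LSeries a (σ + t * Complex.I)‖ ≤ C * (1 + ‖t‖) ^ (1 / 2 : ℝ)) :
    ‖∑' n : ℕ, a n * rieszWeight (n / x)‖
      ≤ C * x ^ σ * ∫ t : ℝ, 4 * (1 + ‖t‖) ^ (-(3 / 2) : ℝ) := by
  have hintegrand (t : ℝ) : ‖LSeries a (σ + t * Complex.I) *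
      ((x : ℂ) ^ (σ + t * Complex.I : ℂ) * rieszKernel (σ + t * Complex.I))‖
      ≤ C * x ^ σ * (4 * (1 + ‖t‖) ^ (-(3 / 2) : ℝ)) := by
    have ht : 0 < 1 + ‖t‖ := by positivity
    have hre : (σ + t * Complex.I).re = σ := by simp
    rw [norm_mul, norm_mul, Complex.norm_cpow_eq_rpow_re_of_pos hx, hre]
    calc _ ≤ C * (1 + ‖t‖) ^ (1 / 2 : ℝ) * (x ^ σ * (4 * (1 + ‖t‖) ^ (-2 : ℝ))) :=
          mul_le_mul (hC t) (by gcongr; exact norm_rieszKernel_le hσ t) (by positivity)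
            ((norm_nonneg _).trans (hC t))
      _ = C * x ^ σ * (4 * ((1 + ‖t‖) ^ (1 / 2 : ℝ) * (1 + ‖t‖) ^ (-2 : ℝ))) := by ring
      _ = _ := by
          rw [← Real.rpow_add ht]
          norm_num
  calc ‖∑' n : ℕ, a n * rieszWeight (n / x)‖
      ≤ ‖(2 * Real.pi : ℂ)‖ * ‖∑' n : ℕ, a n * rieszWeight (n / x)‖ := by
        refine le_mul_of_one_le_left (norm_nonneg _) ?_
        rw [norm_mul, Complex.norm_two, Complex.norm_real, Real.norm_of_nonneg Real.pi_pos.le]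
        linarith [Real.pi_gt_three]
    _ ≤ ∫ t : ℝ, C * x ^ σ * (4 * (1 + ‖t‖) ^ (-(3 / 2) : ℝ)) := by
        rw [← norm_mul, two_pi_mul_tsum_mul_rieszWeight hσ ha hx]
        refine norm_integral_le_of_norm_le (Integrable.const_mul ?_ _) (.of_forall hintegrand)
        exact (integrable_one_add_norm (E := ℝ) (μ := volume) (by norm_num)).const_mul 4
    _ = _ := integral_const_mul _ _

lemma tsum_mul_rieszWeight_natCast (a : ℕ → ℂ) {m : ℕ} (hm : 0 < m) :
    ∑' n : ℕ, a n * rieszWeight (n / (m : ℝ)) = ∑ n ∈ Ioc 0 m, a n * (1 - n / m) := by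
  have hweight {n : ℕ} (hn : 0 < n) :
      rieszWeight (n / (m : ℝ)) = (max (1 - n / m : ℝ) 0 : ℝ) :=
    rieszWeight_of_pos (by positivity)
  have hm' : (0 : ℝ) < m := Nat.cast_pos.2 hm
  rw [tsum_eq_sum (s := Ioc 0 m) fun n hn ↦ ?_]
  · refine sum_congr rfl fun n hn ↦ ?_
    obtain ⟨hn₀, hnm⟩ := mem_Ioc.1 hn
    have : (n : ℝ) / m ≤ 1 := (div_le_one hm').2 (Nat.cast_le.2 hnm)
    rw [hweight hn₀, max_eq_left (by linarith)]
    push_cast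
    rfl
  · rcases n.eq_zero_or_pos with rfl | hn₀
    · simp [rieszWeight]
    · have hmn : m < n := by simpa [hn₀] using hn
      have : 1 < (n : ℝ) / m := (one_lt_div hm').2 (Nat.cast_lt.2 hmn)
      rw [hweight hn₀, max_eq_right (by linarith), Complex.ofReal_zero, mul_zero]

/-! ### The prime number theorem with an arbitrary power of log saved -/

/-- The coefficients `Λ n - 1` of the Dirichlet series `-ζ'/ζ - ζ`. -/
noncomputable def vonMangoldtSubOne (n : ℕ) : ℝ :=
  Λ n - 1

lemma hasSum_vonMangoldtSubOne {s : ℂ} (hs : 1 < s.re) :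
    LSeriesHasSum (fun n ↦ (vonMangoldtSubOne n : ℂ)) s (zetaRemainder s) := by
  have h := (ArithmeticFunction.LSeriesSummable_vonMangoldt hs).LSeriesHasSum.sub
    (LSeriesSummable_one_iff.2 hs).LSeriesHasSum
  rw [ArithmeticFunction.LSeries_vonMangoldt_eq_deriv_riemannZeta_div hs,
    LSeries_one_eq_riemannZeta hs, neg_div] at h
  rw [zetaRemainder_eq (by rintro rfl; simp at hs) (riemannZeta_ne_zero_of_one_le_re hs.le)]
  refine (LSeriesHasSum_congr _ _ fun {n} _ ↦ ?_).1 h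
  simp [vonMangoldtSubOne]

lemma iterate_logMul_apply (f : ℕ → ℂ) (N n : ℕ) :
    (LSeries.logMul^[N] f) n = (Real.log n : ℂ) ^ N * f n := by
  induction N with
  | zero => simp
  | succ N ih =>
    rw [Function.iterate_succ_apply', LSeries.logMul, ih, ← Complex.natCast_log]
    ring

lemma natCast_mul_sum_iterate_logMul (c : ℕ → ℝ) (N : ℕ) {m : ℕ} (hm : 0 < m) :
    (m : ℂ) * ∑ n ∈ Ioc 0 m, (LSeries.logMul^[N] fun n ↦ (c n : ℂ)) n * (1 - n / m)
      = (∑ n ∈ Ioc 0 m, Real.log n ^ N * c n * (m - n) : ℝ) := by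
  push_cast [iterate_logMul_apply, mul_sum]
  refine sum_congr rfl fun n _ ↦ ?_
  have : (m : ℂ) ≠ 0 := Nat.cast_ne_zero.2 hm.ne'
  field_simp

lemma abscissaOfAbsConv_vonMangoldtSubOne_lt {σ : ℝ} (hσ : 1 < σ) :
    LSeries.abscissaOfAbsConv (fun n ↦ (vonMangoldtSubOne n : ℂ)) < σ := by
  have hle : LSeries.abscissaOfAbsConv (fun n ↦ (vonMangoldtSubOne n : ℂ)) ≤ (1 : ℝ) :=
    LSeries.abscissaOfAbsConv_le_of_forall_lt_LSeriesSummable fun y hy ↦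
      (hasSum_vonMangoldtSubOne (by simpa using hy)).LSeriesSummable
  exact hle.trans_lt (EReal.coe_lt_coe_iff.2 hσ)

lemma exists_norm_LSeries_iterate_logMul_le (N : ℕ) :
    ∃ C ≥ 0, ∀ s : ℂ, 1 < s.re → s.re ≤ 3 / 2 →
      ‖LSeries (LSeries.logMul^[N] fun n ↦ (vonMangoldtSubOne n : ℂ)) s‖
        ≤ C * (1 + |s.im|) ^ (1 / 2 : ℝ) := by
  obtain ⟨C, hC, hbound⟩ := exists_norm_iteratedDeriv_zetaRemainder_le N one_half_pos
  refine ⟨C, hC, fun s hs₁ hs₂ ↦ ?_⟩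
  have heq : LSeries (fun n ↦ (vonMangoldtSubOne n : ℂ)) =ᶠ[𝓝 s] zetaRemainder := by
    filter_upwards [(isOpen_lt continuous_const Complex.continuous_re).mem_nhds hs₁] with w hw
    exact (hasSum_vonMangoldtSubOne hw).LSeries_eq
  have hderiv := LSeries_iteratedDeriv N (abscissaOfAbsConv_vonMangoldtSubOne_lt hs₁)
  have hs := hbound s hs₁.le hs₂
  rw [← heq.iteratedDeriv_eq N, hderiv, norm_mul, norm_pow, norm_neg, norm_one, one_pow,
    one_mul] at hs
  exact hs

lemma natCast_rpow_one_add_inv_le {m : ℕ} (hm : 0 < m) :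
    (m : ℝ) ^ (1 + 1 / (2 + Real.log m)) ≤ Real.exp 1 * m := by
  have : 0 ≤ Real.log m := Real.log_natCast_nonneg m
  have hm' : (0 : ℝ) < m := Nat.cast_pos.2 hm
  rw [Real.rpow_add hm', Real.rpow_one, mul_comm, Real.rpow_def_of_pos hm', mul_one_div]
  gcongr
  exact (div_le_one (by positivity)).2 (by linarith)

theorem exists_abs_sum_vonMangoldtSubOne_mul_sub_le (N : ℕ) :
    ∃ C ≥ 0, ∀ m : ℕ,
      |∑ n ∈ Ioc 0 m, Real.log n ^ N * vonMangoldtSubOne n * (m - n)| ≤ C * m ^ 2 := by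
  obtain ⟨C, hC, hbound⟩ := exists_norm_LSeries_iterate_logMul_le N
  set I : ℝ := ∫ t : ℝ, 4 * (1 + ‖t‖) ^ (-(3 / 2) : ℝ)
  have : 0 ≤ I := integral_nonneg fun t ↦ by positivity
  refine ⟨C * Real.exp 1 * I, by positivity, fun m ↦ ?_⟩
  rcases m.eq_zero_or_pos with rfl | hm
  · simp
  have hm' : (0 : ℝ) < m := Nat.cast_pos.2 hm
  have hlog : 0 ≤ Real.log m := Real.log_natCast_nonneg m
  set σ : ℝ := 1 + 1 / (2 + Real.log m)
  have hσ₁ : 1 < σ := lt_add_of_pos_right _ (by positivity)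
  have hσ₂ : σ ≤ 3 / 2 := by
    have : 1 / (2 + Real.log m) ≤ 1 / 2 := by gcongr; linarith
    linarith
  have hsummable : LSeriesSummable
      (LSeries.logMul^[N] fun n ↦ (vonMangoldtSubOne n : ℂ)) σ := by
    refine LSeriesSummable_of_abscissaOfAbsConv_lt_re ?_
    rw [LSeries.absicssaOfAbsConv_logPowMul]
    exact abscissaOfAbsConv_vonMangoldtSubOne_lt hσ₁
  have hperron := norm_tsum_mul_rieszWeight_le hσ₁.le hsummable hm' fun t ↦ by
    simpa using hbound (σ + t * Complex.I) (by simpa using hσ₁) (by simpa using hσ₂)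
  rw [← Real.norm_eq_abs, ← Complex.norm_real, ← natCast_mul_sum_iterate_logMul _ N hm, norm_mul,
    Complex.norm_natCast, ← tsum_mul_rieszWeight_natCast _ hm]
  calc _ ≤ m * (C * (m : ℝ) ^ σ * I) := by gcongr
    _ ≤ m * (C * (Real.exp 1 * m) * I) := by
        gcongr
        exact natCast_rpow_one_add_inv_le hm
    _ = _ := by ring

lemma sum_Ioc_mul_eq_by_parts (b w : ℕ → ℝ) {m j : ℕ} (hmj : m ≤ j) :
    ∑ i ∈ Ioc m j, b i * w i = (∑ i ∈ Ioc m j, b i) * w (j + 1) +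
      ∑ i ∈ Ioc m j, (∑ l ∈ Ioc m i, b l) * (w i - w (i + 1)) := by
  induction j, hmj using Nat.le_induction with
  | base => simp
  | succ j hmj ih =>
    simp only [sum_Ioc_succ_top hmj, ih]
    ring

lemma abs_sum_Ioc_mul_le {b w : ℕ → ℝ} {B : ℝ} {m j : ℕ} (hmj : m ≤ j)
    (hB : ∀ i ∈ Icc m j, |∑ l ∈ Ioc m i, b l| ≤ B) :
    |∑ i ∈ Ioc m j, b i * w i| ≤ B * (|w (j + 1)| + ∑ i ∈ Ioc m j, |w i - w (i + 1)|) := by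
  rw [sum_Ioc_mul_eq_by_parts b w hmj, mul_add, mul_sum]
  refine (abs_add_le _ _).trans (add_le_add ?_ ((abs_sum_le_sum_abs _ _).trans ?_))
  · rw [abs_mul]
    gcongr
    exact hB j (right_mem_Icc.2 hmj)
  · refine sum_le_sum fun i hi ↦ ?_
    rw [abs_mul]
    gcongr
    exact hB i (Ioc_subset_Icc_self hi)

lemma sum_Ioc_sub_succ (w : ℕ → ℝ) {m j : ℕ} (hmj : m ≤ j) :
    ∑ i ∈ Ioc m j, (w i - w (i + 1)) = w (m + 1) - w (j + 1) := by
  induction j, hmj using Nat.le_induction with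
  | base => simp
  | succ j hmj ih =>
    rw [sum_Ioc_succ_top hmj, ih]
    ring

lemma abs_sum_Ioc_mul_le_of_antitoneOn {b w : ℕ → ℝ} {B : ℝ} {m j : ℕ} (hmj : m ≤ j)
    (hB : ∀ i ∈ Icc m j, |∑ l ∈ Ioc m i, b l| ≤ B) (hw : AntitoneOn w (Set.Ioi m))
    (hw₀ : 0 ≤ w (j + 1)) :
    |∑ i ∈ Ioc m j, b i * w i| ≤ B * w (m + 1) := by
  have habs : ∑ i ∈ Ioc m j, |w i - w (i + 1)| = ∑ i ∈ Ioc m j, (w i - w (i + 1)) :=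
    sum_congr rfl fun i hi ↦ abs_of_nonneg <| sub_nonneg.2 <|
      hw (mem_Ioc.1 hi).1 ((mem_Ioc.1 hi).1.trans i.lt_succ_self) i.le_succ
  have h := abs_sum_Ioc_mul_le (w := w) hmj hB
  rwa [habs, sum_Ioc_sub_succ w hmj, abs_of_nonneg hw₀, add_sub_cancel] at h

lemma mul_abs_sum_le_of_abs_sum_mul_sub_le {c : ℕ → ℝ} {A W : ℝ} {a y : ℕ}
    (ha : |∑ n ∈ Ioc 0 a, c n * (a - n)| ≤ A)
    (hay : |∑ n ∈ Ioc 0 (a + y), c n * ((a + y : ℕ) - n)| ≤ A)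
    (hc : ∀ n ∈ Ioc a (a + y), |c n| ≤ W) :
    y * |∑ n ∈ Ioc 0 a, c n| ≤ 2 * A + y ^ 2 * W := by
  have htail : |∑ n ∈ Ioc a (a + y), c n * ((a + y : ℕ) - n)| ≤ y ^ 2 * W := by
    calc |∑ n ∈ Ioc a (a + y), c n * ((a + y : ℕ) - n)|
        ≤ ∑ n ∈ Ioc a (a + y), |c n * ((a + y : ℕ) - n)| := abs_sum_le_sum_abs _ _
      _ ≤ ∑ _n ∈ Ioc a (a + y), W * y := by
        refine sum_le_sum fun n hn ↦ ?_
        have hlo : (a : ℝ) ≤ n := by exact_mod_cast (mem_Ioc.1 hn).1.le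
        have hhi : (n : ℝ) ≤ (a + y : ℕ) := by exact_mod_cast (mem_Ioc.1 hn).2
        rw [abs_mul, abs_of_nonneg (sub_nonneg.2 hhi)]
        gcongr
        · exact (abs_nonneg _).trans (hc n hn)
        · exact hc n hn
        · push_cast
          linarith
      _ = y ^ 2 * W := by
        rw [sum_const, Nat.card_Ioc, add_tsub_cancel_left, nsmul_eq_mul]
        ring
  have hsplit : y * ∑ n ∈ Ioc 0 a, c n =
      ∑ n ∈ Ioc 0 (a + y), c n * ((a + y : ℕ) - n) - ∑ n ∈ Ioc 0 a, c n * (a - n) -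
        ∑ n ∈ Ioc a (a + y), c n * ((a + y : ℕ) - n) := by
    rw [← sum_Ioc_consecutive _ (Nat.zero_le a) (Nat.le_add_right a y), add_sub_right_comm,
      add_sub_cancel_right, ← sum_sub_distrib, mul_sum]
    refine sum_congr rfl fun _ _ ↦ ?_
    push_cast
    ring
  rw [← Nat.abs_cast y, ← abs_mul, hsplit, Nat.abs_cast]
  rw [abs_le] at *
  constructor <;> linarith

lemma log_natCast_le_two_mul_log {n x : ℕ} (h : n ≤ x * x) : Real.log n ≤ 2 * Real.log x := by
  rcases n.eq_zero_or_pos with rfl | hn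
  · simpa using Real.log_natCast_nonneg x
  · have hx : (x : ℝ) ≠ 0 := by
      rintro hx
      simp [Nat.cast_eq_zero.1 hx, hn.ne'] at h
    rw [two_mul, ← Real.log_mul hx hx]
    exact Real.log_le_log (Nat.cast_pos.2 hn) (by exact_mod_cast h)

lemma abs_log_pow_mul_vonMangoldtSubOne_le {n : ℕ} {L : ℝ} (hL : 1 ≤ L) (hn : Real.log n ≤ L)
    (N : ℕ) : |Real.log n ^ N * vonMangoldtSubOne n| ≤ L ^ (N + 1) := by
  have hnonneg := ArithmeticFunction.vonMangoldt_nonneg (n := n)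
  have hle := ArithmeticFunction.vonMangoldt_le_log (n := n)
  have hlog := Real.log_natCast_nonneg n
  rw [abs_mul, abs_of_nonneg (pow_nonneg hlog N), pow_succ]
  gcongr
  rw [vonMangoldtSubOne, abs_le]
  constructor <;> linarith

lemma eventually_le_log_natCast (c : ℝ) : ∀ᶠ x : ℕ in atTop, c ≤ Real.log x :=
  (Real.tendsto_log_atTop.comp tendsto_natCast_atTop_atTop).eventually_ge_atTop c

lemma eventually_log_natCast_pow_le (j : ℕ) : ∀ᶠ x : ℕ in atTop, Real.log x ^ j ≤ x := by
  have h := (Real.isLittleO_pow_log_id_atTop (n := j)).bound one_pos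
  filter_upwards [tendsto_natCast_atTop_atTop.eventually h] with x hx
  simpa using (le_abs_self _).trans hx

lemma exists_natCast_mul_between {x : ℕ} {t : ℝ} (ht : 1 ≤ t) (htx : t ≤ x) :
    ∃ y ≤ x, 0 < y ∧ x ≤ y * t ∧ y * t ≤ 2 * x := by
  have ht₀ : 0 < t := zero_lt_one.trans_le ht
  have hone : 1 ≤ x / t := (one_le_div ht₀).2 htx
  refine ⟨⌈x / t⌉₊, Nat.ceil_le.2 (div_le_self (by positivity) ht),
    Nat.ceil_pos.2 (by positivity), (div_le_iff₀ ht₀).1 (Nat.le_ceil _), ?_⟩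
  rw [← le_div_iff₀ ht₀, mul_div_assoc]
  linarith [Nat.ceil_lt_add_one (zero_le_one.trans hone)]

lemma exists_abs_sum_log_pow_mul_vonMangoldtSubOne_le (M : ℕ) : ∃ C ≥ 0, ∀ᶠ x : ℕ in atTop,
    ∀ m ≤ x, |∑ n ∈ Ioc 0 m, Real.log n ^ (2 * M + 1) * vonMangoldtSubOne n| ≤
      C * (x * Real.log x ^ (M + 1)) := by
  obtain ⟨C, hC, hT⟩ := exists_abs_sum_vonMangoldtSubOne_mul_sub_le (2 * M + 1)
  refine ⟨8 * C + 2 * 4 ^ (M + 1), by positivity, ?_⟩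
  filter_upwards [eventually_le_log_natCast 1, eventually_log_natCast_pow_le (M + 1),
    eventually_ge_atTop 2] with x hL hLx hx m hm
  set L := Real.log x
  obtain ⟨y, hyx, hy₀, hxy, hyL⟩ := exists_natCast_mul_between (one_le_pow₀ hL) hLx
  have hA : ∀ i ≤ 2 * x,
      |∑ n ∈ Ioc 0 i, Real.log n ^ (2 * M + 1) * vonMangoldtSubOne n * (i - n)| ≤
        C * (2 * x) ^ 2 := fun i hi ↦ by
    refine (hT i).trans ?_
    gcongr
    exact_mod_cast hi
  have hW : ∀ n ∈ Ioc m (m + y), |Real.log n ^ (2 * M + 1) * vonMangoldtSubOne n| ≤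
      (2 * L) ^ (2 * (M + 1)) := fun n hn ↦
    abs_log_pow_mul_vonMangoldtSubOne_le (by linarith)
      (log_natCast_le_two_mul_log (by nlinarith [(mem_Ioc.1 hn).2])) _
  have hmain := mul_abs_sum_le_of_abs_sum_mul_sub_le (hA m (by omega)) (hA (m + y) (by omega)) hW
  refine le_of_mul_le_mul_left (hmain.trans ?_) (Nat.cast_pos.2 hy₀)
  calc 2 * (C * (2 * x) ^ 2) + y ^ 2 * (2 * L) ^ (2 * (M + 1))
      = 8 * C * x * x + 4 ^ (M + 1) * y * L ^ (M + 1) * (y * L ^ (M + 1)) := by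
        rw [mul_pow _ L, pow_mul 2, mul_comm 2 (M + 1), pow_mul L]
        norm_num
        ring
    _ ≤ 8 * C * x * (y * L ^ (M + 1)) + 4 ^ (M + 1) * y * L ^ (M + 1) * (2 * x) := by gcongr
    _ = y * ((8 * C + 2 * 4 ^ (M + 1)) * (x * L ^ (M + 1))) := by ring

lemma eventually_sqrt_mul_log_natCast_le (M : ℕ) :
    ∀ᶠ x : ℕ in atTop, √x * Real.log x ≤ x / Real.log x ^ M := by
  filter_upwards [eventually_log_natCast_pow_le ((M + 1) * 2),
    eventually_le_log_natCast 1] with x hx hL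
  have hpow : Real.log x ^ (M + 1) ≤ √x := Real.le_sqrt_of_sq_le (by rwa [← pow_mul])
  rw [le_div_iff₀ (by positivity), mul_assoc, ← pow_succ']
  calc √x * Real.log x ^ (M + 1) ≤ √x * √x := by gcongr
    _ = x := Real.mul_self_sqrt x.cast_nonneg

lemma abs_sum_Ioc_le_of_abs_sum_log_pow_mul_le {c : ℕ → ℝ} {A : ℝ} {N s m : ℕ} (hs : 0 < s)
    (hsm : s ≤ m) (hS : ∀ i ≤ m, |∑ n ∈ Ioc 0 i, Real.log n ^ N * c n| ≤ A) :
    |∑ n ∈ Ioc s m, c n| ≤ 2 * A * (Real.log (s + 1 : ℕ) ^ N)⁻¹ := by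
  have hlog : ∀ n : ℕ, s < n → 0 < Real.log n := fun n hn ↦
    Real.log_pos (by exact_mod_cast (by omega : 1 < n))
  have hcancel : ∑ n ∈ Ioc s m, c n =
      ∑ n ∈ Ioc s m, Real.log n ^ N * c n * (Real.log n ^ N)⁻¹ := by
    refine sum_congr rfl fun n hn ↦ ?_
    have := hlog n (mem_Ioc.1 hn).1
    field_simp
  have hpartial : ∀ i ∈ Icc s m, |∑ n ∈ Ioc s i, Real.log n ^ N * c n| ≤ 2 * A := fun i hi ↦ by
    have hi := mem_Icc.1 hi
    have hsplit := sum_Ioc_consecutive (fun n ↦ Real.log n ^ N * c n) (Nat.zero_le s) hi.1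
    rw [eq_sub_of_add_eq' hsplit]
    linarith [abs_sub (∑ n ∈ Ioc 0 i, Real.log n ^ N * c n) (∑ n ∈ Ioc 0 s, Real.log n ^ N * c n),
      hS i hi.2, hS s hsm]
  have hanti : AntitoneOn (fun n : ℕ ↦ (Real.log n ^ N)⁻¹) (Set.Ioi s) := fun a ha b _ hab ↦ by
    have ha' := hlog a ha
    have hsa : 0 < a := Nat.zero_lt_of_lt ha
    dsimp only
    gcongr
  rw [hcancel]
  exact abs_sum_Ioc_mul_le_of_antitoneOn hsm hpartial hanti
    (inv_nonneg.2 (pow_nonneg (Real.log_natCast_nonneg _) _))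

lemma abs_sum_vonMangoldtSubOne_le {m x : ℕ} (hx : 1 ≤ Real.log x) (hm : m ≤ x) :
    |∑ n ∈ Ioc 0 m, vonMangoldtSubOne n| ≤ m * Real.log x := by
  calc |∑ n ∈ Ioc 0 m, vonMangoldtSubOne n|
      ≤ ∑ n ∈ Ioc 0 m, |vonMangoldtSubOne n| := abs_sum_le_sum_abs _ _
    _ ≤ ∑ _n ∈ Ioc 0 m, Real.log x := sum_le_sum fun n hn ↦ by
      have hlog : Real.log n ≤ Real.log x := Real.log_le_log (Nat.cast_pos.2 (mem_Ioc.1 hn).1)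
        (Nat.cast_le.2 ((mem_Ioc.1 hn).2.trans hm))
      simpa using abs_log_pow_mul_vonMangoldtSubOne_le hx hlog 0
    _ = m * Real.log x := by simp

lemma exists_abs_sum_vonMangoldtSubOne_le (M : ℕ) : ∃ C ≥ 0, ∀ᶠ x : ℕ in atTop,
    ∀ m ≤ x, |∑ n ∈ Ioc 0 m, vonMangoldtSubOne n| ≤ C * (x / Real.log x ^ M) := by
  obtain ⟨C, hC, hS⟩ := exists_abs_sum_log_pow_mul_vonMangoldtSubOne_le M
  refine ⟨1 + 2 * C * 2 ^ (2 * M + 1), by positivity, ?_⟩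
  filter_upwards [hS, eventually_le_log_natCast 1,
    eventually_sqrt_mul_log_natCast_le M, eventually_gt_atTop 0] with x hS hL hsmall hx m hm
  set L := Real.log x
  have hshort : ∀ m ≤ x.sqrt, |∑ n ∈ Ioc 0 m, vonMangoldtSubOne n| ≤ x / L ^ M := fun m hm ↦ by
    calc |∑ n ∈ Ioc 0 m, vonMangoldtSubOne n|
        ≤ m * L := abs_sum_vonMangoldtSubOne_le hL (hm.trans x.sqrt_le_self)
      _ ≤ √x * L := by
        gcongr
        exact (Nat.cast_le.2 hm).trans Real.nat_sqrt_le_real_sqrt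
      _ ≤ x / L ^ M := hsmall
  have hnonneg : 0 ≤ 2 * C * 2 ^ (2 * M + 1) * (x / L ^ M) := by positivity
  rcases le_total m x.sqrt with hms | hms
  · linarith [hshort m hms]
  have hL₂ : L ≤ 2 * Real.log (x.sqrt + 1 : ℕ) := log_natCast_le_two_mul_log x.lt_succ_sqrt.le
  have hlong : |∑ n ∈ Ioc x.sqrt m, vonMangoldtSubOne n| ≤
      2 * C * 2 ^ (2 * M + 1) * (x / L ^ M) := by
    calc |∑ n ∈ Ioc x.sqrt m, vonMangoldtSubOne n|
        ≤ 2 * (C * (x * L ^ (M + 1))) * (Real.log (x.sqrt + 1 : ℕ) ^ (2 * M + 1))⁻¹ :=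
          abs_sum_Ioc_le_of_abs_sum_log_pow_mul_le (Nat.sqrt_pos.2 hx) hms
            fun i hi ↦ hS i (hi.trans hm)
      _ ≤ 2 * (C * (x * L ^ (M + 1))) * ((L / 2) ^ (2 * M + 1))⁻¹ := by
        gcongr
        linarith
      _ = 2 * C * 2 ^ (2 * M + 1) * (x / L ^ M) := by
        rw [div_pow]
        field_simp
        ring
  rw [← sum_Ioc_consecutive _ (Nat.zero_le _) hms]
  linarith [abs_add_le (∑ n ∈ Ioc 0 x.sqrt, vonMangoldtSubOne n)
    (∑ n ∈ Ioc x.sqrt m, vonMangoldtSubOne n), hshort _ le_rfl]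

lemma psi_natCast_sub (m : ℕ) :
    Chebyshev.psi m - m = ∑ n ∈ Ioc 0 m, vonMangoldtSubOne n := by
  simp [vonMangoldtSubOne, Chebyshev.psi]

theorem exists_abs_theta_sub_le (M : ℕ) : ∃ C ≥ 0, ∀ᶠ x : ℕ in atTop, ∀ m ≤ x,
    |Chebyshev.theta m - m| ≤ C * (x / Real.log x ^ M) := by
  obtain ⟨C, hC, hpsi⟩ := exists_abs_sum_vonMangoldtSubOne_le M
  refine ⟨C + 2, by positivity, ?_⟩
  filter_upwards [hpsi, eventually_sqrt_mul_log_natCast_le M] with x hpsi hsmall m hm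
  rcases m.eq_zero_or_pos with rfl | hm₀
  · simp only [Nat.cast_zero, Chebyshev.theta_zero, sub_self, abs_zero]
    have := Real.log_natCast_nonneg x
    positivity
  have htheta : |Chebyshev.psi m - Chebyshev.theta m| ≤ 2 * (x / Real.log x ^ M) := by
    calc |Chebyshev.psi m - Chebyshev.theta m|
        ≤ 2 * √m * Real.log m := Chebyshev.abs_psi_sub_theta_le_sqrt_mul_log (mod_cast hm₀)
      _ ≤ 2 * (√x * Real.log x) := by
        rw [mul_assoc]
        have := Real.log_natCast_nonneg m
        gcongr
      _ ≤ 2 * (x / Real.log x ^ M) := by gcongr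
  have hpsi := hpsi m hm
  rw [← psi_natCast_sub] at hpsi
  rw [abs_sub_comm] at htheta
  linarith [abs_sub_le (Chebyshev.theta m) (Chebyshev.psi m) m]

/-! ### Cosine increments -/

section PrimitiveRoots

variable {R : Type*} [CommRing R] [IsDomain R] {n : ℕ} {ζ : R}

lemma sum_nthRootsFinset_one (hζ : IsPrimitiveRoot ζ n) (hn : 0 < n) :
    ∑ z ∈ Polynomial.nthRootsFinset n (1 : R), z = if n = 1 then 1 else 0 := by
  have : NeZero n := ⟨hn.ne'⟩
  have hpow : ∑ i ∈ range n, ζ ^ i = ∑ z ∈ Polynomial.nthRootsFinset n (1 : R), z := by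
    refine sum_bij (fun i _ ↦ ζ ^ i) (fun i _ ↦ ?_)
      (fun i hi j hj ↦ hζ.pow_inj (mem_range.1 hi) (mem_range.1 hj)) (fun z hz ↦ ?_)
      fun _ _ ↦ rfl
    · rw [Polynomial.mem_nthRootsFinset hn, ← pow_mul, mul_comm, pow_mul, hζ.pow_eq_one, one_pow]
    · obtain ⟨i, hi, rfl⟩ := hζ.eq_pow_of_pow_eq_one ((Polynomial.mem_nthRootsFinset hn 1).1 hz)
      exact ⟨i, mem_range.2 hi, rfl⟩
  rw [← hpow]
  split_ifs with h
  · simp [h]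
  · exact hζ.geom_sum_eq_zero (by omega)

lemma sum_primitiveRoots_eq_moebius (hζ : IsPrimitiveRoot ζ n) (hn : 0 < n) :
    ∑ z ∈ primitiveRoots n R, z = ArithmeticFunction.moebius n := by
  classical
  have hinv := (ArithmeticFunction.sum_eq_iff_sum_smul_moebius_eq_on
    (f := fun m ↦ ∑ z ∈ primitiveRoots m R, z) (g := fun m ↦ if m = 1 then (1 : R) else 0)
    {m | m ∣ n} (fun a b hab hb ↦ hab.trans hb)).1 (fun m hm hmn ↦ ?_) n hn dvd_rfl
  · rw [← hinv, sum_eq_single (n, 1)]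
    · simp
    · rintro ⟨a, b⟩ hab hne
      have hb : b ≠ 1 := by
        rintro rfl
        exact hne (by simpa using (Nat.mem_divisorsAntidiagonal.1 hab).1)
      simp [hb]
    · simp [hn.ne']
  · obtain ⟨d, rfl⟩ := hmn
    rw [← sum_nthRootsFinset_one (hζ.pow hn (mul_comm m d)) hm,
      IsPrimitiveRoot.nthRoots_one_eq_biUnion_primitiveRoots,
      sum_biUnion fun i _ j _ hij ↦ IsPrimitiveRoot.disjoint hij]

lemma sum_coprime_pow_eq_moebius (hζ : IsPrimitiveRoot ζ n) (hn : 0 < n) :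
    ∑ r ∈ range n with r.Coprime n, ζ ^ r = ArithmeticFunction.moebius n := by
  have : NeZero n := ⟨hn.ne'⟩
  rw [← sum_primitiveRoots_eq_moebius hζ hn]
  refine sum_bij (fun i _ ↦ ζ ^ i) (fun i hi ↦ ?_) (fun i hi j hj ↦ ?_) (fun z hz ↦ ?_)
    fun _ _ ↦ rfl
  · exact (mem_primitiveRoots hn).2 (hζ.pow_of_coprime i (mem_filter.1 hi).2)
  · exact hζ.pow_inj (mem_range.1 (mem_filter.1 hi).1) (mem_range.1 (mem_filter.1 hj).1)
  · obtain ⟨i, hi, hcop, rfl⟩ := hζ.isPrimitiveRoot_iff.1 ((mem_primitiveRoots hn).1 hz)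
    exact ⟨i, mem_filter.2 ⟨mem_range.2 hi, hcop⟩, rfl⟩

end PrimitiveRoots

/-- The increment over `[n, n + 1]` of `1 - cos (2πx/k)`, a `k`-periodic test function that
vanishes at the multiples of `k`. -/
noncomputable def cosIncrement (k n : ℕ) : ℝ :=
  Real.cos (2 * Real.pi / k * n) - Real.cos (2 * Real.pi / k * (n + 1))

lemma cos_two_pi_div_mul_add {k : ℕ} (hk : 0 < k) (q : ℕ) (x : ℝ) :
    Real.cos (2 * Real.pi / k * (q * k + x)) = Real.cos (2 * Real.pi / k * x) := by
  have : 2 * Real.pi / k * (q * k + x) = 2 * Real.pi / k * x + q * (2 * Real.pi) := by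
    field_simp
    ring
  rw [this, Real.cos_add_nat_mul_two_pi]

section

variable {k : ℕ}

lemma cosIncrement_mod (hk : 0 < k) (n : ℕ) : cosIncrement k (n % k) = cosIncrement k n := by
  have hn : (n : ℝ) = (n / k : ℕ) * k + (n % k : ℕ) := by
    exact_mod_cast (Nat.div_add_mod' n k).symm
  rw [cosIncrement, cosIncrement, hn, add_assoc, cos_two_pi_div_mul_add hk,
    cos_two_pi_div_mul_add hk]

lemma abs_cosIncrement_le (k n : ℕ) : |cosIncrement k n| ≤ 2 * Real.pi / k := by
  refine (Real.abs_cos_sub_cos_le _ _).trans_eq ?_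
  rw [← mul_sub, sub_add_cancel_left, abs_mul, abs_neg, abs_one, mul_one,
    abs_of_nonneg (by positivity)]

lemma abs_cosIncrement_sub_succ_le (k n : ℕ) :
    |cosIncrement k n - cosIncrement k (n + 1)| ≤ (2 * Real.pi / k) ^ 2 := by
  set h := 2 * Real.pi / k
  set x := h * (n + 1) with hx
  have hcos : cosIncrement k n - cosIncrement k (n + 1) =
      -(2 * (1 - Real.cos h) * Real.cos x) := by
    have hleft : h * n = x - h := by rw [hx]; ring
    have hright : h * ((n + 1 : ℕ) + 1) = x + h := by rw [hx]; push_cast; ring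
    rw [cosIncrement, cosIncrement, hleft, hright, Real.cos_sub, Real.cos_add, Nat.cast_succ]
    ring
  have hle := Real.cos_le_one h
  have hge := Real.one_sub_sq_div_two_le_cos (x := h)
  rw [hcos, abs_neg, abs_mul, abs_of_nonneg (by linarith)]
  nlinarith [Real.abs_cos_le_one x]

lemma cosIncrement_eq_re (k n : ℕ) :
    cosIncrement k n = ((1 - Complex.exp (2 * Real.pi * Complex.I / k)) *
      Complex.exp (2 * Real.pi * Complex.I / k) ^ n).re := by
  have hexp (m : ℕ) : (Complex.exp (2 * Real.pi * Complex.I / k) ^ m).re =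
      Real.cos (2 * Real.pi / k * m) := by
    rw [← Complex.exp_nat_mul, ← Complex.exp_ofReal_mul_I_re]
    congr 2
    push_cast
    ring
  rw [sub_mul, one_mul, ← pow_succ', Complex.sub_re, hexp, hexp, cosIncrement, Nat.cast_succ]

lemma abs_sum_coprime_cosIncrement_le (hk : 0 < k) :
    |∑ r ∈ range k with r.Coprime k, cosIncrement k r| ≤ 2 * Real.pi / k := by
  have hζ := Complex.isPrimitiveRoot_exp k hk.ne'
  have hdist : ‖1 - Complex.exp (2 * Real.pi * Complex.I / k)‖ ≤ 2 * Real.pi / k := by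
    have harg : 2 * Real.pi * Complex.I / k = Complex.I * (2 * Real.pi / k : ℝ) := by
      push_cast
      ring
    rw [norm_sub_rev, harg]
    refine Real.norm_exp_I_mul_ofReal_sub_one_le.trans_eq ?_
    rw [Real.norm_eq_abs, abs_of_nonneg (by positivity)]
  have hmoebius : ‖((ArithmeticFunction.moebius k : ℤ) : ℂ)‖ ≤ 1 := by
    rw [Complex.norm_intCast]
    exact_mod_cast ArithmeticFunction.abs_moebius_le_one
  simp only [cosIncrement_eq_re]
  rw [← Complex.re_sum, ← mul_sum, sum_coprime_pow_eq_moebius hζ hk]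
  refine (Complex.abs_re_le_norm _).trans ?_
  rw [norm_mul]
  exact (mul_le_of_le_one_right (norm_nonneg _) hmoebius).trans hdist

end

/-! ### Lower bounds for the totient -/

lemma one_le_log_natCast {n : ℕ} (hn : 3 ≤ n) : 1 ≤ Real.log n := by
  have hn' : (3 : ℝ) ≤ n := by exact_mod_cast hn
  rw [Real.le_log_iff_exp_le (by linarith)]
  linarith [Real.exp_one_lt_d9]

lemma one_div_le_prod_one_sub_two_div {s : Finset ℕ} (hs : ∀ n ∈ s, 3 ≤ n ∧ Odd n) :
    1 / (2 * #s + 1 : ℝ) ≤ ∏ n ∈ s, (1 - 2 / (n : ℝ)) := by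
  induction s using Finset.induction_on_max with
  | empty => simp
  | insert a s hlt ih =>
    have has : a ∉ s := fun h ↦ lt_irrefl _ (hlt a h)
    have hcard : #s ≤ #(Ico 1 (a / 2)) := by
      refine card_le_card_of_injOn (· / 2) (fun n hn ↦ ?_) fun m hm n hn hmn ↦ ?_
      · obtain ⟨hn3, m, rfl⟩ := hs n (mem_insert_of_mem hn)
        obtain ⟨-, l, rfl⟩ := hs a (mem_insert_self a s)
        have := hlt _ hn
        simp only [coe_Ico, Set.mem_Ico]
        omega
      · obtain ⟨-, m, rfl⟩ := hs m (mem_insert_of_mem hm)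
        obtain ⟨-, n, rfl⟩ := hs n (mem_insert_of_mem hn)
        dsimp only at hmn
        omega
    have ha : (2 * #s + 3 : ℝ) ≤ a := by
      obtain ⟨ha3, l, rfl⟩ := hs a (mem_insert_self a s)
      rw [Nat.card_Ico] at hcard
      exact_mod_cast (by omega : 2 * #s + 3 ≤ 2 * l + 1)
    have hfactor : (2 * #s + 1) / (2 * #s + 3) ≤ 1 - 2 / (a : ℝ) := by
      calc (2 * #s + 1) / (2 * #s + 3) = 1 - 2 / (2 * #s + 3 : ℝ) := by field_simp; ring
        _ ≤ 1 - 2 / (a : ℝ) := by gcongr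
    rw [card_insert_of_notMem has, prod_insert has]
    calc 1 / (2 * ((#s + 1 : ℕ) : ℝ) + 1)
        = (2 * #s + 1) / (2 * #s + 3) * (1 / (2 * #s + 1)) := by push_cast; field_simp; ring
      _ ≤ (1 - 2 / (a : ℝ)) * ∏ n ∈ s, (1 - 2 / (n : ℝ)) :=
          mul_le_mul hfactor (ih fun n hn ↦ hs n (mem_insert_of_mem hn)) (by positivity)
            (le_trans (by positivity) hfactor)

lemma one_div_le_prod_one_sub_inv_sq_of_odd {s : Finset ℕ} (hs : ∀ n ∈ s, 3 ≤ n ∧ Odd n) :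
    1 / (2 * #s + 1 : ℝ) ≤ (∏ n ∈ s, (1 - (n : ℝ)⁻¹)) ^ 2 := by
  refine (one_div_le_prod_one_sub_two_div hs).trans ?_
  rw [← prod_pow]
  refine prod_le_prod (fun n hn ↦ ?_) fun n _ ↦ ?_
  · have : (3 : ℝ) ≤ n := by exact_mod_cast (hs n hn).1
    rw [sub_nonneg, div_le_one (by linarith)]
    linarith
  · rw [div_eq_mul_inv]
    nlinarith [sq_nonneg ((n : ℝ)⁻¹)]

lemma one_div_le_prod_primeFactors_one_sub_inv_sq (k : ℕ) :
    1 / (4 * (2 * #k.primeFactors + 1) : ℝ) ≤ (∏ p ∈ k.primeFactors, (1 - (p : ℝ)⁻¹)) ^ 2 := by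
  have hodd : ∀ p ∈ k.primeFactors.erase 2, 3 ≤ p ∧ Odd p := fun p hp ↦ by
    obtain ⟨hp2, hp⟩ := mem_erase.1 hp
    have hprime := Nat.prime_of_mem_primeFactors hp
    exact ⟨hprime.two_le.lt_of_ne hp2.symm, hprime.odd_of_ne_two hp2⟩
  have hprod : 1 / (2 * #k.primeFactors + 1 : ℝ) ≤
      (∏ p ∈ k.primeFactors.erase 2, (1 - (p : ℝ)⁻¹)) ^ 2 := by
    refine le_trans ?_ (one_div_le_prod_one_sub_inv_sq_of_odd hodd)
    gcongr
    exact erase_subset _ _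
  have hpos : 0 ≤ 1 / (2 * #k.primeFactors + 1 : ℝ) := by positivity
  have hquarter : 1 / (4 * (2 * #k.primeFactors + 1) : ℝ) =
      1 / 4 * (1 / (2 * #k.primeFactors + 1)) := by
    field_simp
  rw [hquarter]
  by_cases h2 : 2 ∈ k.primeFactors
  · rw [← mul_prod_erase _ _ h2, mul_pow]
    norm_num at hprod ⊢
    linarith
  · rw [erase_eq_of_notMem h2] at hprod
    linarith

lemma card_primeFactors_le_two_mul_log {k : ℕ} (hk : 0 < k) :
    (#k.primeFactors : ℝ) ≤ 2 * Real.log k := by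
  have hpow : 2 ^ #k.primeFactors ≤ k :=
    (pow_card_le_prod _ _ _ fun p hp ↦ (Nat.prime_of_mem_primeFactors hp).two_le).trans
      (Nat.le_of_dvd hk (Nat.prod_primeFactors_dvd k))
  have hlog : #k.primeFactors * Real.log 2 ≤ Real.log k := by
    rw [← Real.log_pow]
    exact Real.log_le_log (by positivity) (by exact_mod_cast hpow)
  nlinarith [Real.log_two_gt_d9, Nat.cast_nonneg (α := ℝ) #k.primeFactors]

lemma sq_le_mul_log_mul_totient_sq {k : ℕ} (hk : 3 ≤ k) :
    (k : ℝ) ^ 2 ≤ 20 * Real.log k * (k.totient : ℝ) ^ 2 := by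
  have htotient : (k.totient : ℝ) = k * ∏ p ∈ k.primeFactors, (1 - (p : ℝ)⁻¹) := by
    simpa using congrArg (fun q : ℚ ↦ (q : ℝ)) (Nat.totient_eq_mul_prod_factors k)
  have hlog := one_le_log_natCast hk
  have hprod : 1 / (20 * Real.log k) ≤ (∏ p ∈ k.primeFactors, (1 - (p : ℝ)⁻¹)) ^ 2 := by
    refine le_trans (one_div_le_one_div_of_le (by positivity) ?_)
      (one_div_le_prod_primeFactors_one_sub_inv_sq k)
    linarith [card_primeFactors_le_two_mul_log (k := k) (by omega)]
  rw [div_le_iff₀ (by positivity)] at hprod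
  rw [htotient, mul_pow]
  nlinarith [sq_nonneg (k : ℝ)]

lemma le_mul_log_mul_totient {k : ℕ} (hk : 3 ≤ k) :
    (k : ℝ) ≤ 20 * Real.log k * k.totient := by
  have hk0 : (0 : ℝ) < k := by exact_mod_cast (by omega : 0 < k)
  have hle : (k.totient : ℝ) ≤ k := by exact_mod_cast Nat.totient_le k
  refine le_of_mul_le_mul_left ?_ hk0
  calc (k : ℝ) * k = k ^ 2 := (sq _).symm
    _ ≤ 20 * Real.log k * (k.totient : ℝ) ^ 2 := sq_le_mul_log_mul_totient_sq hk
    _ ≤ 20 * Real.log k * (k * k.totient) := by rw [sq]; gcongr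
    _ = k * (20 * Real.log k * k.totient) := by ring

/-! ### Primes covering residue classes -/

lemma abs_sum_sub_mul_sum_coprime_le {k c e : ℕ} {s : Finset ℕ} {f : ℕ → ℝ} {B : ℝ} (hk : 0 < k)
    (hf : ∀ n, f (n % k) = f n) (hB : ∀ n, |f n| ≤ B) (hcard : #s = c * k.totient + e)
    (hcover : ∀ r < k, r.Coprime k → c ≤ #{n ∈ s | n % k = r}) :
    |∑ n ∈ s, f n - c * ∑ r ∈ range k with r.Coprime k, f r| ≤ B * e := by
  set excess : ℕ → ℝ := fun r ↦ #{n ∈ s | n % k = r} - if r.Coprime k then (c : ℝ) else 0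
  have hmaps : ∀ n ∈ s, n % k ∈ range k := fun n _ ↦ mem_range.2 (Nat.mod_lt n hk)
  have hexcess : ∀ r ∈ range k, 0 ≤ excess r := fun r hr ↦ by
    dsimp only [excess]
    split_ifs with hcop
    · exact sub_nonneg.2 (Nat.cast_le.2 (hcover r (mem_range.1 hr) hcop))
    · simp
  have hfiber : ∑ n ∈ s, f n = ∑ r ∈ range k, (#{n ∈ s | n % k = r} : ℝ) * f r := by
    rw [← sum_fiberwise_of_maps_to hmaps]
    refine sum_congr rfl fun r _ ↦ ?_
    rw [← nsmul_eq_mul, ← sum_const]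
    exact sum_congr rfl fun n hn ↦ by rw [← hf n, (mem_filter.1 hn).2]
  have htotal : ∑ r ∈ range k, excess r = e := by
    have hs : (#s : ℝ) = ∑ r ∈ range k, (#{n ∈ s | n % k = r} : ℝ) := by
      exact_mod_cast card_eq_sum_card_fiberwise hmaps
    have hcop : (#{r ∈ range k | r.Coprime k} : ℝ) = k.totient := by
      simp_rw [Nat.totient_eq_card_coprime, Nat.coprime_comm]
    rw [sum_sub_distrib, ← hs, ← sum_filter, sum_const, nsmul_eq_mul, hcop, hcard]
    push_cast
    ring
  have hdiff : ∑ n ∈ s, f n - c * ∑ r ∈ range k with r.Coprime k, f r =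
      ∑ r ∈ range k, excess r * f r := by
    rw [hfiber, mul_sum, sum_filter, ← sum_sub_distrib]
    refine sum_congr rfl fun r _ ↦ ?_
    dsimp only [excess]
    split_ifs <;> ring
  calc |∑ n ∈ s, f n - c * ∑ r ∈ range k with r.Coprime k, f r|
      ≤ ∑ r ∈ range k, |excess r * f r| := by rw [hdiff]; exact abs_sum_le_sum_abs _ _
    _ ≤ ∑ r ∈ range k, B * excess r := sum_le_sum fun r hr ↦ by
        rw [abs_mul, abs_of_nonneg (hexcess r hr), mul_comm]
        exact mul_le_mul_of_nonneg_right (hB r) (hexcess r hr)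
    _ = B * e := by rw [← mul_sum, htotal]

lemma abs_sum_filter_sub_sum_filter_le {s t : Finset ℕ} {f : ℕ → ℝ} {B : ℝ} (p : ℕ → Prop)
    [DecidablePred p] (hst : s ⊆ t) (hB : ∀ n, |f n| ≤ B) :
    |∑ n ∈ t with p n, f n - ∑ n ∈ s with p n, f n| ≤ B * #(t \ s) := by
  rw [sum_filter, sum_filter, ← sum_sdiff hst, add_sub_cancel_right]
  refine (abs_sum_le_sum_abs _ _).trans ?_
  rw [mul_comm, ← nsmul_eq_mul, ← sum_const]
  refine sum_le_sum fun n _ ↦ ?_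
  split_ifs
  · exact hB n
  · simpa using (abs_nonneg _).trans (hB n)

lemma abs_sum_Icc_filter_sub_sum_Ioc_filter_le {f : ℕ → ℝ} {B : ℝ} (p : ℕ → Prop)
    [DecidablePred p] (hB : ∀ n, |f n| ≤ B) (a b c : ℕ) :
    |∑ n ∈ Icc a b with p n, f n - ∑ n ∈ Ioc c b with p n, f n| ≤ B * (|(a : ℝ) - c| + 1) := by
  have hB₀ : 0 ≤ B := (abs_nonneg _).trans (hB 0)
  rcases le_total a (c + 1) with h | h
  · refine (abs_sum_filter_sub_sum_filter_le p (fun n ↦ ?_) hB).trans ?_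
    · simp only [mem_Ioc, mem_Icc]
      omega
    have hsub : Icc a b \ Ioc c b ⊆ Ico a (c + 1) := fun n ↦ by
      simp only [Finset.mem_sdiff, mem_Ioc, mem_Icc, mem_Ico]
      omega
    have hcard : (#(Icc a b \ Ioc c b) : ℝ) ≤ (c + 1 - a : ℕ) := by
      simpa using card_le_card hsub
    rw [Nat.cast_sub h, Nat.cast_succ] at hcard
    gcongr
    linarith [neg_abs_le ((a : ℝ) - c)]
  · rw [abs_sub_comm]
    refine (abs_sum_filter_sub_sum_filter_le p (fun n ↦ ?_) hB).trans ?_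
    · simp only [mem_Ioc, mem_Icc]
      omega
    have hsub : Ioc c b \ Icc a b ⊆ Ico (c + 1) a := fun n ↦ by
      simp only [Finset.mem_sdiff, mem_Ioc, mem_Icc, mem_Ico]
      omega
    have hcard : (#(Ioc c b \ Icc a b) : ℝ) ≤ (a - (c + 1) : ℕ) := by
      simpa using card_le_card hsub
    rw [Nat.cast_sub h, Nat.cast_succ] at hcard
    gcongr
    linarith [le_abs_self ((a : ℝ) - c)]

lemma primeCounting_le (n : ℕ) : Nat.primeCounting n ≤ n := by
  rw [← Nat.primesLE_card_eq_primeCounting, Nat.primesLE_eq_filter_Ioc_zero]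
  exact (card_filter_le _ _).trans_eq (by simp)

/-- `k` is a `P(α, β, γ, ι)`-integer: the primes of `[α, β]` number `γ φ(k) + ι` and cover every
reduced residue class modulo `k` at least `γ` times, leaving `ι` primes in arbitrary classes. A
class is given by its residue `r < k`. -/
structure IsPInteger (α β γ ι k : ℕ) : Prop where
  card_primes : ((Icc α β).filter Nat.Prime).card = γ * k.totient + ι
  le_card_primes_mod : ∀ r : ℕ, r < k → Nat.Coprime r k →
    γ ≤ ((Icc α β).filter (fun p ↦ p.Prime ∧ p % k = r)).card

namespace IsPInteger

variable {α β γ ι k : ℕ}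

lemma abs_sum_primes_cosIncrement_le (h : IsPInteger α β γ ι k) (hk : 0 < k) :
    |∑ p ∈ Icc α β with p.Prime, cosIncrement k p| ≤ 2 * Real.pi / k * (ι + γ) := by
  have hdiff := abs_sum_sub_mul_sum_coprime_le hk (cosIncrement_mod hk) (abs_cosIncrement_le k)
    h.card_primes fun r hr hcop ↦ by
      rw [filter_filter]
      exact h.le_card_primes_mod r hr hcop
  have hcoprime : |(γ : ℝ) * ∑ r ∈ range k with r.Coprime k, cosIncrement k r| ≤
      2 * Real.pi / k * γ := by
    rw [abs_mul, Nat.abs_cast, mul_comm]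
    exact mul_le_mul_of_nonneg_right (abs_sum_coprime_cosIncrement_le hk) (Nat.cast_nonneg γ)
  rw [mul_add]
  linarith [abs_sub_abs_le_abs_sub (∑ p ∈ Icc α β with p.Prime, cosIncrement k p)
    (γ * ∑ r ∈ range k with r.Coprime k, cosIncrement k r)]

lemma mul_totient_le_primeCounting (h : IsPInteger α β γ ι k) :
    γ * k.totient ≤ Nat.primeCounting β :=
  calc γ * k.totient ≤ #{p ∈ Icc α β | p.Prime} := h.card_primes ▸ Nat.le_add_right _ _
    _ ≤ #(Nat.primesLE β) := card_le_card fun p hp ↦ by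
        simp only [mem_filter, mem_Icc] at hp
        exact Nat.mem_primesLE.2 ⟨hp.1.2, hp.2⟩
    _ = Nat.primeCounting β := Nat.primesLE_card_eq_primeCounting β

lemma mul_le_of_primeCounting_lt_totient {c : ℕ} (h : IsPInteger α β γ ι k) (hγ : 1 ≤ γ)
    (hc : Nat.primeCounting (c * k) < k.totient) : c * k ≤ β := by
  by_contra! hlt
  have hle := (Nat.le_mul_of_pos_left k.totient hγ).trans h.mul_totient_le_primeCounting
  exact (hle.trans (Nat.monotone_primeCounting hlt.le)).not_gt hc

lemma le_of_le_mul_log_pow {C : ℝ} {D : ℕ} (h : IsPInteger α β γ ι k) (hk : 3 ≤ k)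
    (hβ : β ≤ C * k * Real.log k ^ D) : γ ≤ 20 * C * Real.log k ^ (D + 1) := by
  have hk0 : (0 : ℝ) < k := by exact_mod_cast (by omega : 0 < k)
  have : 0 ≤ Real.log k := Real.log_natCast_nonneg k
  have hγ : (γ * k.totient : ℝ) ≤ β := by
    exact_mod_cast h.mul_totient_le_primeCounting.trans (primeCounting_le β)
  refine le_of_mul_le_mul_left ?_ hk0
  calc (k : ℝ) * γ ≤ 20 * Real.log k * k.totient * γ := by
        gcongr
        exact le_mul_log_mul_totient hk
    _ = 20 * Real.log k * (γ * k.totient) := by ring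
    _ ≤ 20 * Real.log k * (C * k * Real.log k ^ D) :=
        mul_le_mul_of_nonneg_left (hγ.trans hβ) (by positivity)
    _ = k * (20 * C * Real.log k ^ (D + 1)) := by ring

end IsPInteger

lemma eventually_primeCounting_mul_lt_totient {c : ℕ} (hc : 0 < c) :
    ∀ᶠ k : ℕ in atTop, Nat.primeCounting (c * k) < k.totient := by
  have hupper := (tendsto_natCast_atTop_atTop.comp (tendsto_id.const_mul_atTop' hc)).eventually
    (Chebyshev.eventually_primeCounting_le (ε := 1) one_pos)
  filter_upwards [hupper, eventually_ge_atTop 3, eventually_le_log_natCast (180 * c ^ 2 + 1)]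
    with k hupper hk hlog
  by_contra! hle
  have hk0 : (0 : ℝ) < k := by exact_mod_cast (by omega : 0 < k)
  have hL : 1 ≤ Real.log k := one_le_log_natCast hk
  have hlog4 : Real.log 4 + 1 ≤ 3 := by
    rw [show (4 : ℝ) = 2 ^ 2 by norm_num, Real.log_pow]
    norm_num
    linarith [Real.log_two_lt_d9]
  have hlogmul : Real.log k ≤ Real.log (c * k : ℕ) :=
    Real.log_le_log hk0 (by exact_mod_cast Nat.le_mul_of_pos_left k hc)
  have htotient : k.totient ≤ 3 * (c * k) / Real.log k := by
    calc (k.totient : ℝ) ≤ Nat.primeCounting ⌊((c * k : ℕ) : ℝ)⌋₊ := by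
          rw [Nat.floor_natCast]
          exact_mod_cast hle
      _ ≤ (Real.log 4 + 1) * (c * k : ℕ) / Real.log (c * k : ℕ) := hupper
      _ ≤ 3 * (c * k) / Real.log k := by
          rw [Nat.cast_mul] at hlogmul ⊢
          gcongr
  rw [le_div_iff₀ (by linarith)] at htotient
  have hsq : k ^ 2 * Real.log k ≤ k ^ 2 * (180 * c ^ 2) := by
    calc k ^ 2 * Real.log k ≤ 20 * Real.log k * k.totient ^ 2 * Real.log k := by
          gcongr
          exact sq_le_mul_log_mul_totient_sq hk
      _ = 20 * (k.totient * Real.log k) ^ 2 := by ring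
      _ ≤ 20 * (3 * (c * k)) ^ 2 := by gcongr
      _ = k ^ 2 * (180 * c ^ 2) := by ring
  linarith [le_of_mul_le_mul_left hsq (by positivity)]

/-! ### The bias of the cosine increments over primes -/

lemma sub_sub_le_sum_Ioc_sub_mul {G u : ℕ → ℝ} {a b m j : ℕ} (ham : a ≤ m) (hmj : m ≤ j)
    (hjb : j ≤ b) (hG : ∀ n, 0 ≤ G n) (hGone : ∀ n ∈ Ioc m j, 1 ≤ G (n + 1))
    (hu : ∀ n, 0 ≤ u n) (hanti : ∀ n > a, u (n + 1) ≤ u n) :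
    u (m + 1) - u (j + 1) - G (a + 1) * u (a + 1) ≤
      ∑ n ∈ Ioc a b, (G (n + 1) - G n) * u n := by
  have hparts : ∑ n ∈ Ioc a b, (G (n + 1) - G n) * u n =
      G (b + 1) * u (b + 1) - G (a + 1) * u (a + 1) +
        ∑ n ∈ Ioc a b, G (n + 1) * (u n - u (n + 1)) := by
    have htele := sum_Ioc_sub_succ (fun n ↦ G n * u n) (ham.trans (hmj.trans hjb))
    rw [← neg_sub, ← htele, ← sum_neg_distrib, ← sum_add_distrib]
    exact sum_congr rfl fun n _ ↦ by ring
  have hmid : u (m + 1) - u (j + 1) ≤ ∑ n ∈ Ioc a b, G (n + 1) * (u n - u (n + 1)) := by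
    rw [← sum_Ioc_sub_succ u hmj]
    calc ∑ n ∈ Ioc m j, (u n - u (n + 1))
        ≤ ∑ n ∈ Ioc m j, G (n + 1) * (u n - u (n + 1)) := sum_le_sum fun n hn ↦
          le_mul_of_one_le_left
            (sub_nonneg.2 (hanti n (ham.trans_lt (mem_Ioc.1 hn).1))) (hGone n hn)
      _ ≤ ∑ n ∈ Ioc a b, G (n + 1) * (u n - u (n + 1)) :=
          sum_le_sum_of_subset_of_nonneg (Ioc_subset_Ioc ham hjb) fun n hn _ ↦
            mul_nonneg (hG _) (sub_nonneg.2 (hanti n (mem_Ioc.1 hn).1))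
  linarith [mul_nonneg (hG (b + 1)) (hu (b + 1))]

lemma cos_two_pi_div_mul_add_nonpos {k j : ℕ} (hk : 0 < k) (hj : k ≤ 4 * j) (hj' : 4 * j ≤ 3 * k)
    (q : ℕ) : Real.cos (2 * Real.pi / k * (q * k + j)) ≤ 0 := by
  have hk0 : (0 : ℝ) < k := Nat.cast_pos.2 hk
  have hlo : (k : ℝ) ≤ 4 * j := by exact_mod_cast hj
  have hhi : (4 * j : ℝ) ≤ 3 * k := by exact_mod_cast hj'
  rw [cos_two_pi_div_mul_add hk, div_mul_eq_mul_div]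
  refine Real.cos_nonpos_of_pi_div_two_le_of_le ?_ ?_
  · rw [div_le_div_iff₀ two_pos hk0]
    nlinarith [Real.pi_pos]
  · rw [div_le_iff₀ hk0]
    nlinarith [Real.pi_pos]

lemma inv_log_natCast_succ_le {n : ℕ} (hn : 3 ≤ n) :
    (Real.log (n + 1 : ℕ))⁻¹ ≤ (Real.log n)⁻¹ :=
  inv_anti₀ (zero_lt_one.trans_le (one_le_log_natCast hn))
    (Real.log_le_log (by positivity) (by exact_mod_cast n.le_succ))

lemma one_div_le_inv_log_sub_inv_log {c k m n : ℕ} (hck : c ≤ k) (hm : 3 ≤ m) (hmn : m < n)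
    (hn : n ≤ c * k) (hk : k ≤ 8 * (n - m)) :
    1 / (32 * c * Real.log k ^ 2) ≤ (Real.log m)⁻¹ - (Real.log n)⁻¹ := by
  have hm0 : (0 : ℝ) < m := by positivity
  have hn0 : (0 : ℝ) < n := by exact_mod_cast (by omega : 0 < n)
  have hc0 : (0 : ℝ) < c := by exact_mod_cast Nat.pos_of_mul_pos_right (by omega : 0 < c * k)
  have hlogm := one_le_log_natCast hm
  have hlogn := one_le_log_natCast (hm.trans hmn.le)
  have hlogmn : Real.log m ≤ Real.log n := Real.log_le_log hm0 (by exact_mod_cast hmn.le)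
  have hlognk : Real.log n ≤ 2 * Real.log k :=
    log_natCast_le_two_mul_log (hn.trans (Nat.mul_le_mul_right k hck))
  have hgap : 1 / (8 * c) ≤ Real.log n - Real.log m := by
    have hlog := Real.one_sub_inv_le_log_of_pos (div_pos hn0 hm0)
    rw [Real.log_div hn0.ne' hm0.ne', inv_div, one_sub_div hn0.ne'] at hlog
    refine le_trans ?_ hlog
    rw [div_le_div_iff₀ (by positivity) hn0, one_mul, ← Nat.cast_sub hmn.le]
    have : n ≤ (n - m) * (8 * c) :=
      calc n ≤ c * k := hn
        _ ≤ c * (8 * (n - m)) := Nat.mul_le_mul_left c hk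
        _ = (n - m) * (8 * c) := by ring
    exact_mod_cast this
  have hprod : Real.log m * Real.log n ≤ 4 * Real.log k ^ 2 := by nlinarith
  calc 1 / (32 * c * Real.log k ^ 2) = 1 / (8 * c) / (4 * Real.log k ^ 2) := by
        rw [div_div]
        ring_nf
    _ ≤ (Real.log n - Real.log m) / (Real.log m * Real.log n) :=
        div_le_div₀ (sub_nonneg.2 hlogmn) hgap (by positivity) hprod
    _ = (Real.log m)⁻¹ - (Real.log n)⁻¹ := by
        rw [inv_sub_inv (by linarith) (by linarith)]

lemma one_sub_cos_mul_inv_log_le {k : ℕ} (hk : 0 < k) (q : ℕ) :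
    (1 - Real.cos (2 * Real.pi / k * (q * k + 3 : ℕ))) * (Real.log (q * k + 3 : ℕ))⁻¹ ≤
      5 * (2 * Real.pi / k) ^ 2 := by
  have hlog : (Real.log (q * k + 3 : ℕ))⁻¹ ≤ 1 :=
    inv_le_one_of_one_le₀ (one_le_log_natCast (Nat.le_add_left 3 _))
  refine (mul_le_of_le_one_right (sub_nonneg.2 (Real.cos_le_one _)) hlog).trans ?_
  have hcos := Real.one_sub_sq_div_two_le_cos (x := 2 * Real.pi / k * 3)
  rw [Nat.cast_add, Nat.cast_mul, Nat.cast_ofNat, cos_two_pi_div_mul_add hk]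
  nlinarith [sq_nonneg (2 * Real.pi / k)]

lemma one_le_one_sub_cos {k q n : ℕ} (hk : 4 ≤ k) (hn : q * k + k / 4 < n)
    (hn' : n ≤ q * k + k / 2 + 1) : 1 ≤ 1 - Real.cos (2 * Real.pi / k * n) := by
  obtain ⟨j, rfl⟩ : ∃ j, n = q * k + j := ⟨n - q * k, by omega⟩
  have hcos := cos_two_pi_div_mul_add_nonpos (by omega) (by omega : k ≤ 4 * j) (by omega) q
  push_cast
  linarith

-- The sum starts at `q * k + 2` so that `log n ≥ 1` throughout, also for `q = 0`.
lemma le_sum_cosIncrement_mul_inv_log {q k b : ℕ} (hk : 16 ≤ k) (hqk : q + 2 ≤ k)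
    (hb : (q + 2) * k ≤ b) :
    1 / (32 * (q + 2) * Real.log k ^ 2) - 5 * (2 * Real.pi / k) ^ 2 ≤
      ∑ n ∈ Ioc (q * k + 2) b, cosIncrement k n * (Real.log n)⁻¹ := by
  have hk0 : 0 < k := by omega
  have hq1 : (q + 1) * k = q * k + k := by ring
  have hq2 : (q + 2) * k = q * k + 2 * k := by ring
  have hsum := sub_sub_le_sum_Ioc_sub_mul (G := fun n ↦ 1 - Real.cos (2 * Real.pi / k * n))
    (u := fun n ↦ (Real.log n)⁻¹) (a := q * k + 2) (m := (q + 1) * k + k / 4)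
    (j := (q + 1) * k + k / 2) (b := b) (by omega) (by omega) (by omega)
    (fun n ↦ sub_nonneg.2 (Real.cos_le_one _))
    (fun n hn ↦ one_le_one_sub_cos (q := q + 1) (by omega) (by grind) (by grind))
    (fun n ↦ inv_nonneg.2 (Real.log_natCast_nonneg n))
    (fun n hn ↦ inv_log_natCast_succ_le (by omega))
  have hincrement (n : ℕ) : 1 - Real.cos (2 * Real.pi / k * (n + 1 : ℕ)) -
      (1 - Real.cos (2 * Real.pi / k * n)) = cosIncrement k n := by
    rw [cosIncrement, Nat.cast_succ]
    ring
  have hdrop := one_div_le_inv_log_sub_inv_log (c := q + 2) (m := (q + 1) * k + k / 4 + 1)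
    (n := (q + 1) * k + k / 2 + 1) hqk (by omega) (by omega) (by omega) (by omega)
  have hstart := one_sub_cos_mul_inv_log_le hk0 q
  simp only [hincrement] at hsum
  rw [Nat.cast_add, Nat.cast_ofNat] at hdrop
  linarith

lemma sum_Ioc_primeLog_sub_one {a b : ℕ} (hab : a ≤ b) :
    ∑ n ∈ Ioc a b, ((if n.Prime then Real.log n else 0) - 1) =
      Chebyshev.theta b - b - (Chebyshev.theta a - a) := by
  have htheta (n : ℕ) : Chebyshev.theta n = ∑ p ∈ Ioc 0 n, if p.Prime then Real.log p else 0 := by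
    rw [Chebyshev.theta, Nat.floor_natCast, sum_filter]
  have hsplit := sum_Ioc_consecutive (fun p : ℕ ↦ if p.Prime then Real.log p else 0) a.zero_le hab
  rw [sum_sub_distrib, sum_const, Nat.card_Ioc, nsmul_one, Nat.cast_sub hab, htheta, htheta,
    ← hsplit]
  ring

lemma abs_add_sum_Ioc_abs_sub_succ_le {f u : ℕ → ℝ} {A B : ℝ} {a b : ℕ} (hab : a ≤ b)
    (hf : ∀ n, |f n| ≤ A) (hf' : ∀ n, |f n - f (n + 1)| ≤ B) (hu : ∀ n > a, 0 ≤ u n ∧ u n ≤ 1)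
    (hanti : ∀ n > a, u (n + 1) ≤ u n) :
    |f (b + 1) * u (b + 1)| + ∑ n ∈ Ioc a b, |f n * u n - f (n + 1) * u (n + 1)| ≤ A + b * B := by
  have hA : 0 ≤ A := (abs_nonneg _).trans (hf 0)
  have hB : 0 ≤ B := (abs_nonneg _).trans (hf' 0)
  have hlast : |f (b + 1) * u (b + 1)| ≤ A * u (b + 1) := by
    rw [abs_mul, abs_of_nonneg (hu (b + 1) (by omega)).1]
    exact mul_le_mul_of_nonneg_right (hf _) (hu (b + 1) (by omega)).1
  have hterm : ∀ n ∈ Ioc a b,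
      |f n * u n - f (n + 1) * u (n + 1)| ≤ B + A * (u n - u (n + 1)) := fun n hn ↦ by
    have hn := (mem_Ioc.1 hn).1
    have hdrop := sub_nonneg.2 (hanti n hn)
    calc |f n * u n - f (n + 1) * u (n + 1)|
        = |(f n - f (n + 1)) * u n + f (n + 1) * (u n - u (n + 1))| := by ring_nf
      _ ≤ |f n - f (n + 1)| * u n + |f (n + 1)| * (u n - u (n + 1)) := by
          refine (abs_add_le _ _).trans_eq ?_
          rw [abs_mul, abs_mul, abs_of_nonneg (hu n hn).1, abs_of_nonneg hdrop]
      _ ≤ B * 1 + A * (u n - u (n + 1)) := add_le_add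
          (mul_le_mul (hf' n) (hu n hn).2 (hu n hn).1 hB)
          (mul_le_mul_of_nonneg_right (hf _) hdrop)
      _ = B + A * (u n - u (n + 1)) := by rw [mul_one]
  have hsum := sum_le_sum hterm
  rw [sum_add_distrib, sum_const, Nat.card_Ioc, nsmul_eq_mul, ← mul_sum, sum_Ioc_sub_succ u hab]
    at hsum
  have hcount : ((b - a : ℕ) : ℝ) * B ≤ b * B := by
    gcongr
    exact b.sub_le a
  linarith [mul_le_of_le_one_right hA (hu (a + 1) (by omega)).2]

lemma sum_Ioc_primeLog_sub_one_mul_inv_log (f : ℕ → ℝ) {a b : ℕ} (ha : 2 ≤ a) :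
    ∑ n ∈ Ioc a b, ((if n.Prime then Real.log n else 0) - 1) * (f n * (Real.log n)⁻¹) =
      ∑ p ∈ Ioc a b with p.Prime, f p - ∑ n ∈ Ioc a b, f n * (Real.log n)⁻¹ := by
  rw [sum_filter, ← sum_sub_distrib]
  refine sum_congr rfl fun n hn ↦ ?_
  have hlog : Real.log n ≠ 0 :=
    (zero_lt_one.trans_le (one_le_log_natCast (ha.trans_lt (mem_Ioc.1 hn).1))).ne'
  split_ifs
  · field_simp
  · ring

lemma abs_sum_primes_sub_sum_mul_inv_log_le {f : ℕ → ℝ} {A B E : ℝ} {a b : ℕ} (ha : 2 ≤ a)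
    (hab : a ≤ b) (hf : ∀ n, |f n| ≤ A) (hf' : ∀ n, |f n - f (n + 1)| ≤ B)
    (hE : ∀ m ≤ b, |Chebyshev.theta m - m| ≤ E) :
    |∑ p ∈ Ioc a b with p.Prime, f p - ∑ n ∈ Ioc a b, f n * (Real.log n)⁻¹| ≤
      2 * E * (A + b * B) := by
  have hE₀ : 0 ≤ E := (abs_nonneg _).trans (hE 0 b.zero_le)
  rw [← sum_Ioc_primeLog_sub_one_mul_inv_log f ha]
  refine (abs_sum_Ioc_mul_le (B := 2 * E) hab fun i hi ↦ ?_).trans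
    (mul_le_mul_of_nonneg_left ?_ (by positivity))
  · obtain ⟨hai, hib⟩ := mem_Icc.1 hi
    rw [sum_Ioc_primeLog_sub_one hai, two_mul]
    exact (abs_sub _ _).trans (add_le_add (hE i hib) (hE a hab))
  · exact abs_add_sum_Ioc_abs_sub_succ_le hab hf hf'
      (fun n hn ↦ ⟨inv_nonneg.2 (Real.log_natCast_nonneg n),
        inv_le_one_of_one_le₀ (one_le_log_natCast (ha.trans_lt hn))⟩)
      fun n hn ↦ inv_log_natCast_succ_le (ha.trans_lt hn)

lemma le_sum_primes_cosIncrement {q k b : ℕ} {E : ℝ} (hk : 16 ≤ k) (hqk : q + 2 ≤ k)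
    (hb : (q + 2) * k ≤ b) (hE : ∀ m ≤ b, |Chebyshev.theta m - m| ≤ E) :
    1 / (32 * (q + 2) * Real.log k ^ 2) - 5 * (2 * Real.pi / k) ^ 2 -
        2 * E * (2 * Real.pi / k + b * (2 * Real.pi / k) ^ 2) ≤
      ∑ p ∈ Ioc (q * k + 2) b with p.Prime, cosIncrement k p := by
  have hab : q * k + 2 ≤ b := by nlinarith
  have hsum := abs_sum_primes_sub_sum_mul_inv_log_le (Nat.le_add_left 2 (q * k)) hab
    (abs_cosIncrement_le k) (abs_cosIncrement_sub_succ_le k) hE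
  linarith [neg_le_of_abs_le hsum, le_sum_cosIncrement_mul_inv_log hk hqk hb]

lemma two_pi_div_le {k : ℝ} (hk : 0 < k) : 2 * Real.pi / k ≤ 7 / k := by
  gcongr
  linarith [Real.pi_lt_d2]

lemma tendsto_log_pow_mul_rpow_div (n : ℕ) {d : ℝ} (hd : 0 < d) :
    Tendsto (fun k : ℕ ↦ Real.log k ^ n * ((k : ℝ) ^ (1 - d) / k)) atTop (𝓝 0) := by
  have hlim := (isLittleO_log_rpow_rpow_atTop n hd).tendsto_div_nhds_zero.comp
    tendsto_natCast_atTop_atTop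
  refine hlim.congr' ?_
  filter_upwards [eventually_gt_atTop 0] with k hk
  have hk0 : (0 : ℝ) < k := Nat.cast_pos.2 hk
  rw [Function.comp_apply, Real.rpow_natCast, Real.rpow_sub hk0, Real.rpow_one]
  field_simp

lemma theta_error_mul_variation_le {b k L ℓ C K : ℝ} {D : ℕ} (hk : 0 < k) (hL : 1 ≤ L)
    (hℓ : L ≤ ℓ) (hC : 0 ≤ C) (hK : 0 ≤ K) (hb₀ : 0 ≤ b) (hb : b ≤ K * k * L ^ D) :
    2 * (C * (b / ℓ ^ (2 * D + 3))) * (2 * Real.pi / k + b * (2 * Real.pi / k) ^ 2) ≤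
      2 * C * K * (7 + 49 * K) * (L ^ 3)⁻¹ := by
  have : 0 < L := by linarith
  have herror : b / ℓ ^ (2 * D + 3) ≤ K * k * L ^ D / L ^ (2 * D + 3) := by gcongr
  have hvariation : 2 * Real.pi / k + b * (2 * Real.pi / k) ^ 2 ≤ (7 + 49 * K) * L ^ D / k := by
    have hpi := two_pi_div_le hk
    calc 2 * Real.pi / k + b * (2 * Real.pi / k) ^ 2
        ≤ 7 / k * L ^ D + K * k * L ^ D * (7 / k) ^ 2 :=
          add_le_add (hpi.trans (le_mul_of_one_le_right (by positivity) (one_le_pow₀ hL)))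
            (by gcongr)
      _ = (7 + 49 * K) * L ^ D / k := by
        field_simp
        ring
  calc 2 * (C * (b / ℓ ^ (2 * D + 3))) * (2 * Real.pi / k + b * (2 * Real.pi / k) ^ 2)
      ≤ 2 * (C * (K * k * L ^ D / L ^ (2 * D + 3))) * ((7 + 49 * K) * L ^ D / k) := by gcongr
    _ = 2 * C * K * (7 + 49 * K) * (L ^ 3)⁻¹ := by
        rw [show L ^ (2 * D + 3) = L ^ D * L ^ D * L ^ 3 by ring]
        field_simp

namespace IsPInteger

variable {α β γ ι k : ℕ}

lemma one_div_le_of_abs_theta_sub_le {q : ℕ} {E : ℝ} (h : IsPInteger α β γ ι k) (hk : 16 ≤ k)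
    (hqk : q + 2 ≤ k) (hβ : (q + 2) * k ≤ β) (hE : ∀ m ≤ β, |Chebyshev.theta m - m| ≤ E) :
    1 / (32 * (q + 2) * Real.log k ^ 2) ≤ 5 * (2 * Real.pi / k) ^ 2 +
      2 * E * (2 * Real.pi / k + β * (2 * Real.pi / k) ^ 2) +
      2 * Real.pi / k * (|(α : ℝ) - q * k| + 3 + ι + γ) := by
  have hlower := le_sum_primes_cosIncrement hk hqk hβ hE
  have hupper := le_of_abs_le (h.abs_sum_primes_cosIncrement_le (by omega))
  have hshift := neg_le_of_abs_le (abs_sum_Icc_filter_sub_sum_Ioc_filter_le Nat.Prime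
    (abs_cosIncrement_le k) α β (q * k + 2))
  have hα : |(α : ℝ) - (q * k + 2 : ℕ)| ≤ |(α : ℝ) - q * k| + 2 := by
    rw [Nat.cast_add, Nat.cast_mul, Nat.cast_ofNat, ← sub_sub]
    exact (abs_sub _ _).trans_eq (by rw [abs_two])
  have hα' := mul_le_mul_of_nonneg_left hα (by positivity : 0 ≤ 2 * Real.pi / k)
  linarith

lemma one_div_le_of_le {q D : ℕ} {A B C K : ℝ} (h : IsPInteger α β γ ι k) (hk : 16 ≤ k)
    (hqk : q + 2 ≤ k) (hC : 0 ≤ C) (hK : 0 ≤ K) (hα : |(α : ℝ) - q * k| ≤ A) (hι : ι ≤ B)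
    (hqβ : (q + 2) * k ≤ β) (hβ : β ≤ K * k * Real.log k ^ D)
    (htheta : ∀ m ≤ β, |Chebyshev.theta m - m| ≤ C * (β / Real.log β ^ (2 * D + 3))) :
    1 / (32 * (q + 2)) ≤ 2 * C * K * (7 + 49 * K) * (Real.log k)⁻¹ +
      7 * Real.log k ^ 2 * ((A + B + 20 * K * Real.log k ^ (D + 1) + 38) / k) := by
  have hk1 : (1 : ℝ) ≤ k := by exact_mod_cast (by omega : 1 ≤ k)
  have hk0 : (0 : ℝ) < k := by linarith
  have hL : 1 ≤ Real.log k := one_le_log_natCast (by omega)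
  have hlogβ : Real.log k ≤ Real.log β :=
    Real.log_le_log hk0 (by exact_mod_cast (by nlinarith : k ≤ β))
  have hγ := h.le_of_le_mul_log_pow (by omega) hβ
  have hpi := two_pi_div_le hk0
  have hsq : 5 * (2 * Real.pi / k : ℝ) ^ 2 ≤ 7 * (35 / k : ℝ) :=
    calc 5 * (2 * Real.pi / k : ℝ) ^ 2 ≤ 5 * (7 / k : ℝ) ^ 2 := by gcongr
      _ = 7 * (35 / k : ℝ) / k := by ring
      _ ≤ 7 * (35 / k : ℝ) := div_le_self (by positivity) hk1
  have hsum : 1 / (32 * (q + 2) * Real.log k ^ 2) ≤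
      2 * C * K * (7 + 49 * K) * (Real.log k ^ 3)⁻¹ +
        7 * ((A + B + 20 * K * Real.log k ^ (D + 1) + 38) / k) := by
    calc _ ≤ _ := h.one_div_le_of_abs_theta_sub_le hk hqk hqβ htheta
      _ ≤ 7 * (35 / k) + 2 * C * K * (7 + 49 * K) * (Real.log k ^ 3)⁻¹ +
          7 / k * (A + 3 + B + 20 * K * Real.log k ^ (D + 1)) := by
        have herror := theta_error_mul_variation_le hk0 hL hlogβ hC hK β.cast_nonneg hβ
        gcongr
      _ = _ := by ring
  calc 1 / (32 * (q + 2)) = 1 / (32 * (q + 2) * Real.log k ^ 2) * Real.log k ^ 2 := by field_simp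
    _ ≤ _ := mul_le_mul_of_nonneg_right hsum (sq_nonneg _)
    _ = _ := by field_simp

end IsPInteger

lemma eventually_log_error_lt (A B C K : ℝ) (D : ℕ) {d e ε : ℝ} (hd : 0 < d) (he : 0 < e)
    (hε : 0 < ε) :
    ∀ᶠ k : ℕ in atTop, C * (Real.log k)⁻¹ + 7 * Real.log k ^ 2 *
      ((A * (k : ℝ) ^ (1 - d) + B * (k : ℝ) ^ (1 - e) + K * Real.log k ^ (D + 1) + 38) / k) <
        ε := by
  have hinv := (Real.tendsto_log_atTop.comp tendsto_natCast_atTop_atTop).inv_tendsto_atTop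
  have hlim := ((((hinv.const_mul C).add
    ((tendsto_log_pow_mul_rpow_div 2 hd).const_mul (7 * A))).add
    ((tendsto_log_pow_mul_rpow_div 2 he).const_mul (7 * B))).add
    ((tendsto_log_pow_mul_rpow_div (D + 3) one_pos).const_mul (7 * K))).add
    ((tendsto_log_pow_mul_rpow_div 2 one_pos).const_mul (7 * 38))
  simp only [mul_zero, add_zero] at hlim
  refine (hlim.eventually_lt_const hε).mono fun k hk ↦ lt_of_eq_of_lt ?_ hk
  simp only [Pi.inv_apply, Function.comp_apply, sub_self, Real.rpow_zero]
  ring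

theorem eventually_not_isPInteger (A B : ℝ) {K : ℝ} (hK : 0 ≤ K) (q D : ℕ) {d e : ℝ} (hd : 0 < d)
    (he : 0 < e) :
    ∀ᶠ k : ℕ in atTop, ∀ α β γ ι : ℕ, 1 ≤ γ → |(α : ℝ) - q * k| ≤ A * (k : ℝ) ^ (1 - d) →
      ι ≤ B * (k : ℝ) ^ (1 - e) → β ≤ K * k * Real.log k ^ D → ¬IsPInteger α β γ ι k := by
  obtain ⟨C, hC, htheta⟩ := exists_abs_theta_sub_le (2 * D + 3)
  obtain ⟨x₀, htheta⟩ := eventually_atTop.1 htheta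
  filter_upwards [eventually_log_error_lt A B (2 * C * K * (7 + 49 * K)) (20 * K) D hd he
      (by positivity : (0 : ℝ) < 1 / (32 * (q + 2))),
    eventually_primeCounting_mul_lt_totient (Nat.succ_pos (q + 1)), eventually_ge_atTop 16,
    eventually_ge_atTop (q + 2), eventually_ge_atTop x₀]
    with k herror hcount hk hqk hx₀ α β γ ι hγ hα hι hβ h
  have hqβ := h.mul_le_of_primeCounting_lt_totient hγ hcount
  have hkβ : k ≤ β := by nlinarith
  exact herror.not_ge (h.one_div_le_of_le hk hqk hC hK hα hι hqβ hβ (htheta β (hx₀.trans hkβ)))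

theorem finitely_many_P_integers (d₁ d₂ d₃ C₁ C₂ C₃ : ℝ)
    (hd₁ : 0 < d₁) (hd₂ : 0 < d₂) (hd₃ : 0 < d₃)
    (hC₁ : 0 < C₁) (hC₂ : 0 < C₂) (hC₃ : 0 < C₃) (lam : ℕ) :
    {k : ℕ | 0 < k ∧ ∃ α β γ ι : ℕ, 1 ≤ α ∧ 1 ≤ β ∧ 1 ≤ γ ∧
      |(α : ℝ) - lam * k| ≤ C₁ * (k : ℝ) ^ ((1 : ℝ) - d₁) ∧
      (ι : ℝ) ≤ C₂ * (k : ℝ) ^ ((1 : ℝ) - d₂) ∧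
      (β : ℝ) ≤ C₃ * k * (Real.log k) ^ d₃ ∧
      ((Finset.Icc α β).filter Nat.Prime).card = γ * k.totient + ι ∧
      (∀ r : ℕ, r < k → Nat.Coprime r k →
        γ ≤ ((Finset.Icc α β).filter (fun p => p.Prime ∧ p % k = r)).card)}.Finite := by
  have hnot := (eventually_not_isPInteger C₁ C₂ hC₃.le lam ⌈d₃⌉₊ hd₁ hd₂).and
    (eventually_ge_atTop 3)
  rw [← Nat.cofinite_eq_atTop] at hnot
  refine (eventually_cofinite.1 hnot).subset ?_
  rintro k ⟨-, α, β, γ, ι, -, -, hγ, hα, hι, hβ, hcard, hcover⟩ ⟨hk, hk3⟩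
  refine hk α β γ ι hγ hα hι (hβ.trans ?_) ⟨hcard, hcover⟩
  gcongr
  rw [← Real.rpow_natCast]
  exact Real.rpow_le_rpow_of_exponent_le (one_le_log_natCast hk3) (Nat.le_ceil d₃)
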